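/- Let k ≥ 1 and Δ ≥ 1 be integers and c > 0. There exists a constant C, depending only on k, c and Δ, such that the following holds. Let G be a finite connected graph with vertex set V satisfying ∇_r(G) ≤ c·(r+1)^k for all integers r ≥ 0, let δ: V → {1, …, Δ} be a demand function, and let D ⊆ V be such that the subgraph induced on D is connected and D satisfies the demands (every vertex v ∈ V has at least δ(v) neighbors in D or is itself in D with at least δ(v) vertices of D in its closed neighborhood). Let ε ∈ (0,1) and set K = ⌈C·ε^{−(2k+6)}·(1 + log(1/ε))^{2k+5}⌉. Then every K-locally minimal subset L ⊆ D such that the subgraph induced on L is connected and L satisfies the demands, satisfies |L| ≤ (1 + ε)·min{|S| : S ⊆ D, the subgraph induced on S is connected, and S satisfies the demands}. -/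

import Mathlib

/-- A graph is `t`-shallow if some vertex reaches every other vertex by a path of at most
`t` edges (graph radius at most `t`). -/
def IsShallowGraph {V : Type*} (G : SimpleGraph V) (t : ℕ) : Prop :=
  ∃ h : V, ∀ v : V, G.Reachable h v ∧ G.dist h v ≤ t

/-- `H` is a `t`-shallow minor of `G`. -/
def IsShallowMinor {V W : Type*} (G : SimpleGraph V) (H : SimpleGraph W) (t : ℕ) : Prop :=
  ∃ cl : W → Set V,
    (Pairwise fun w w' => Disjoint (cl w) (cl w')) ∧
    (∀ w, IsShallowGraph (G.induce (cl w)) t) ∧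
    (∀ w w', H.Adj w w' → ∃ u ∈ cl w, ∃ v ∈ cl w', G.Adj u v)

/-- `∇_r(G) ≤ x`. -/
def NablaLE {V : Type*} (G : SimpleGraph V) (r : ℕ) (x : ℝ) : Prop :=
  ∀ (W : Type) [Fintype W] (H : SimpleGraph W),
    IsShallowMinor G H r → (H.edgeSet.ncard : ℝ) ≤ x * (Fintype.card W : ℝ)

/-- `S` satisfies the demands `δ`: for every vertex `v`, the closed neighborhood of `v`
contains at least `δ v` vertices of `S`. -/
def MeetsDemands {V : Type*} (G : SimpleGraph V) (δ : V → ℕ) (S : Set V) : Prop :=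
  ∀ v : V, δ v ≤ ({u ∈ S | u = v ∨ G.Adj u v}).ncard


inductive Sq {V : Type} (G : SimpleGraph V) (A : Set V) (x : V) : V → ℕ → Prop
  | refl (hx : x ∈ A) : Sq G A x x 0
  | step {y z : V} {n : ℕ} (h : Sq G A x y n) (ha : G.Adj y z) (hz : z ∈ A) : Sq G A x z (n + 1)

theorem Sq.mono {V : Type} {G : SimpleGraph V} {A B : Set V} (hAB : A ⊆ B) {x y : V} {n : ℕ}
    (h : Sq G A x y n) : Sq G B x y n := by
  induction h with
  | refl hx => exact .refl (hAB hx)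
  | step _ ha hz ih => exact .step ih ha (hAB hz)

theorem Sq.right_mem {V : Type} {G : SimpleGraph V} {A : Set V} {x y : V} {n : ℕ}
    (h : Sq G A x y n) : y ∈ A := by
  cases h with
  | refl hx => exact hx
  | step _ _ hz => exact hz

theorem Sq.left_mem {V : Type} {G : SimpleGraph V} {A : Set V} {x y : V} {n : ℕ}
    (h : Sq G A x y n) : x ∈ A := by
  induction h with
  | refl hx => exact hx
  | step _ _ _ ih => exact ih

theorem Sq.trans {V : Type} {G : SimpleGraph V} {A : Set V} {x y z : V} {n m : ℕ}
    (h : Sq G A x y n) (h' : Sq G A y z m) : Sq G A x z (n + m) := by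
  induction h' with
  | refl hx => exact h
  | step _ ha hz ih => exact .step ih ha hz

theorem Sq.symm {V : Type} {G : SimpleGraph V} {A : Set V} {x y : V} {n : ℕ}
    (h : Sq G A x y n) : Sq G A y x n := by
  induction h with
  | refl hx => exact .refl hx
  | step h ha hz ih =>
    have := (Sq.step (.refl hz) ha.symm h.right_mem).trans ih
    rwa [show ∀ n, 0 + 1 + n = n + 1 from fun n => by omega] at this

theorem Sq.path {V : Type} {G : SimpleGraph V} {A : Set V} {x y : V} {n : ℕ}
    (h : Sq G A x y n) : ∃ F : Finset V, (F : Set V) ⊆ A ∧ x ∈ F ∧ y ∈ F ∧ F.card ≤ n + 1 ∧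
      ∀ u ∈ F, ∃ m ≤ n, (m = n → u = y) ∧ Sq G (F : Set V) x u m := by
  classical
  induction h with
  | refl hx =>
    refine ⟨{x}, by simpa using hx, by simp, by simp, by simp, ?_⟩
    intro u hu
    have : u = x := by simpa using hu
    subst this
    exact ⟨0, le_rfl, fun _ => rfl, .refl (by simp)⟩
  | @step y z n h ha hz ih =>
    obtain ⟨F, hFA, hx, hy, hc, hu⟩ := ih
    have hsub : (F : Set V) ⊆ ((insert z F : Finset V) : Set V) := by simp
    refine ⟨insert z F, ?_, by simp [hx], by simp, (Finset.card_insert_le _ _).trans (by omega), ?_⟩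
    · intro u hu'
      rcases Finset.mem_insert.1 hu' with rfl | h1
      · exact hz
      · exact hFA h1
    · intro u hu'
      by_cases h1 : u ∈ F
      · obtain ⟨m, hm, _, hs⟩ := hu u h1
        exact ⟨m, by omega, by omega, hs.mono hsub⟩
      · have huz : u = z := by
          rcases Finset.mem_insert.1 hu' with h2 | h2
          · exact h2
          · exact absurd h2 h1
        subst huz
        obtain ⟨m, hm, _, hs⟩ := hu y hy
        exact ⟨m + 1, by omega, fun _ => rfl, (hs.mono hsub).step ha (by simp)⟩

theorem Sq.reach {V : Type} {G : SimpleGraph V} {A : Set V} {x y : V} {n : ℕ}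
    (h : Sq G A x y n) : ∃ (hx : x ∈ A) (hy : y ∈ A),
      ∃ w : (G.induce A).Walk ⟨x, hx⟩ ⟨y, hy⟩, w.length = n := by
  induction h with
  | refl hx => exact ⟨hx, hx, .nil, rfl⟩
  | @step y z n h ha hz ih =>
    obtain ⟨hx, hy, w, hw⟩ := ih
    have had : (G.induce A).Adj ⟨y, hy⟩ ⟨z, hz⟩ := ha
    exact ⟨hx, hz, w.concat had, by simp [hw]⟩

/-- two-sided trimming -/
theorem trim {V : Type} {G : SimpleGraph V} {A B : Set V} {x x' : V} {r : ℕ} (hxx : x ≠ x')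
    (h : ∃ y z a b, a ≤ r ∧ b ≤ r ∧ Sq G A x y a ∧ Sq G B x' z b ∧ (y = z ∨ G.Adj y z)) :
    ∃ F F' : Finset V, ((F : Set V) ⊆ A ∧ x ∈ F ∧ F.card ≤ r + 1 ∧
        ∀ u ∈ F, ∃ m ≤ r, Sq G (F : Set V) x u m) ∧
      ((F' : Set V) ⊆ B ∧ x' ∈ F' ∧ F'.card ≤ r + 1 ∧
        ∀ u ∈ F', ∃ m ≤ r, Sq G (F' : Set V) x' u m) ∧
      Disjoint F F' ∧ ∃ u ∈ F, ∃ v ∈ F', G.Adj u v := by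
  classical
  have h' : ∃ n, ∃ y z a b, a ≤ r ∧ b ≤ r ∧ Sq G A x y a ∧ Sq G B x' z b ∧
      (y = z ∨ G.Adj y z) ∧ a + b = n := by
    obtain ⟨y, z, a, b, h⟩ := h
    exact ⟨a + b, y, z, a, b, h.1, h.2.1, h.2.2.1, h.2.2.2.1, h.2.2.2.2, rfl⟩
  obtain ⟨y, z, a, b, ha, hb, hA, hB, hyz, hab⟩ := Nat.find_spec h'
  have hmin : ∀ y z a' b', a' ≤ r → b' ≤ r → Sq G A x y a' → Sq G B x' z b' →
      (y = z ∨ G.Adj y z) → a + b ≤ a' + b' := by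
    intro y z a' b' h1 h2 h3 h4 h5
    rw [hab]
    exact Nat.find_min' h' ⟨y, z, a', b', h1, h2, h3, h4, h5, rfl⟩
  have hne : y ≠ z := by
    rintro rfl
    cases hA with
    | refl hx =>
      cases hB with
      | refl _ => exact hxx rfl
      | @step w _ n hs had _ =>
        have := hmin _ _ _ _ ha (by omega) (.refl hx) hs (Or.inr had.symm)
        omega
    | @step w _ n hs had _ =>
      have := hmin _ _ _ _ (by omega) hb hs hB (Or.inr had)
      omega
  obtain ⟨F, h1, h2, h3, h4, h5⟩ := hA.path
  obtain ⟨F', g1, g2, g3, g4, g5⟩ := hB.path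
  refine ⟨F, F', ⟨h1, h2, by omega, ?_⟩, ⟨g1, g2, by omega, ?_⟩, ?_, y, h3, z, g3, ?_⟩
  · intro u hu
    obtain ⟨m, hm, _, hs⟩ := h5 u hu
    exact ⟨m, by omega, hs⟩
  · intro u hu
    obtain ⟨m, hm, _, hs⟩ := g5 u hu
    exact ⟨m, by omega, hs⟩
  · rw [Finset.disjoint_left]
    intro u hu hu'
    obtain ⟨m, hm, e, hs⟩ := h5 u hu
    obtain ⟨m', hm', e', hs'⟩ := g5 u hu'
    have := hmin u u m m' (by omega) (by omega) (hs.mono h1) (hs'.mono g1) (Or.inl rfl)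
    exact hne ((e (by omega)).symm.trans (e' (by omega)))
  · exact hyz.resolve_left hne


theorem cnt_card (h q : ℕ) (z : Fin q) (A : Finset (Fin h)) :
    ((Finset.univ.filter (fun χ : Fin h → Fin q => ∀ a ∈ A, χ a = z)).card : ℝ)
      * (q : ℝ) ^ A.card = (q : ℝ) ^ h := by
  classical
  have h1 : (Finset.univ.filter (fun χ : Fin h → Fin q => ∀ a ∈ A, χ a = z)) =
      Fintype.piFinset (fun a => if a ∈ A then {z} else (Finset.univ : Finset (Fin q))) := by
    ext χ
    simp only [Finset.mem_filter, Finset.mem_univ, true_and, Fintype.mem_piFinset]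
    refine forall_congr' fun a => ?_
    by_cases ha : a ∈ A <;> simp [ha]
  rw [h1, Fintype.card_piFinset]
  have h2 : ∀ a : Fin h, (if a ∈ A then ({z} : Finset (Fin q)) else Finset.univ).card =
      if a ∈ A then 1 else q := by
    intro a; split_ifs <;> simp
  simp_rw [h2]
  rw [Finset.prod_ite]
  simp only [Finset.prod_const_one, one_mul, Finset.prod_const]
  push_cast
  rw [← pow_add]
  congr 1
  have := Finset.card_filter_add_card_filter_not (s := (Finset.univ : Finset (Fin h))) (fun a => a ∈ A)
  simp only [Finset.filter_mem_eq_inter, Finset.univ_inter, Finset.card_univ, Fintype.card_fin] at this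
  omega

/-- sampling lemma -/
theorem sampling (h q : ℕ) (hq : 0 < q) (F : Fin h → Fin h → Finset (Fin h))
    (hF : ∀ i j, i ≠ j → 2 * (F i j).card ≤ q) (hFi : ∀ i j, i ∉ F i j ∧ j ∉ F i j)
    (d : ℝ) (hd0 : 0 ≤ d)
    (hb : ∀ J : Finset (Fin h),
      ((Finset.univ.filter (fun p : Fin h × Fin h => p.1 ≠ p.2 ∧ p.1 ∈ J ∧ p.2 ∈ J ∧
        Disjoint (F p.1 p.2) J)).card : ℝ) ≤ 2 * d * J.card) :
    (h : ℝ) ≤ 1 + 4 * d * q := by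
  classical
  rcases Nat.eq_zero_or_pos h with h0 | hpos
  · subst h0
    have : 0 ≤ 4 * d * q := by positivity
    push_cast
    linarith
  have hqr : (0 : ℝ) < q := by exact_mod_cast hq
  let z : Fin q := ⟨0, hq⟩
  let J : (Fin h → Fin q) → Finset (Fin h) := fun χ => Finset.univ.filter (fun i => χ i = z)
  have hJ : ∀ χ i, i ∈ J χ ↔ χ i = z := by intro χ i; simp [J]
  have hsum : ∑ χ : Fin h → Fin q,
      ((Finset.univ.filter (fun p : Fin h × Fin h => p.1 ≠ p.2 ∧ p.1 ∈ J χ ∧ p.2 ∈ J χ ∧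
        Disjoint (F p.1 p.2) (J χ))).card : ℝ) ≤ ∑ χ : Fin h → Fin q, 2 * d * (J χ).card :=
    Finset.sum_le_sum fun χ _ => hb _
  have hR : ∑ χ : Fin h → Fin q, 2 * d * ((J χ).card : ℝ) = 2 * d * (h * ((q : ℝ) ^ h / q)) := by
    rw [← Finset.mul_sum]
    congr 1
    have e1 : ∀ χ : Fin h → Fin q, ((J χ).card : ℝ) = ∑ i : Fin h, if χ i = z then (1 : ℝ) else 0 := by
      intro χ; simp [J]
    simp_rw [e1]
    rw [Finset.sum_comm]
    have e2 : ∀ i : Fin h, (∑ χ : Fin h → Fin q, if χ i = z then (1 : ℝ) else 0) = (q : ℝ) ^ h / q := by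
      intro i
      have := cnt_card h q z {i}
      simp only [Finset.mem_singleton, forall_eq, Finset.card_singleton, pow_one] at this
      rw [eq_div_iff hqr.ne', ← this]
      simp
    simp_rw [e2]
    simp
  have hL : ((h : ℝ) * h - h) * ((q : ℝ) ^ h / (2 * q ^ 2)) ≤ ∑ χ : Fin h → Fin q,
      ((Finset.univ.filter (fun p : Fin h × Fin h => p.1 ≠ p.2 ∧ p.1 ∈ J χ ∧ p.2 ∈ J χ ∧
        Disjoint (F p.1 p.2) (J χ))).card : ℝ) := by
    have e1 : ∀ χ : Fin h → Fin q,
      ((Finset.univ.filter (fun p : Fin h × Fin h => p.1 ≠ p.2 ∧ p.1 ∈ J χ ∧ p.2 ∈ J χ ∧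
        Disjoint (F p.1 p.2) (J χ))).card : ℝ) =
        ∑ p ∈ (Finset.univ : Finset (Fin h)).offDiag, if (p.1 ∈ J χ ∧ p.2 ∈ J χ ∧
        Disjoint (F p.1 p.2) (J χ)) then (1 : ℝ) else 0 := by
      intro χ
      rw [← Finset.sum_filter, Finset.sum_const, nsmul_eq_mul, mul_one]
      congr 2
      ext p
      simp [Finset.mem_offDiag]
    simp_rw [e1]
    rw [Finset.sum_comm]
    have e2 : ((h : ℝ) * h - h) = ((Finset.univ : Finset (Fin h)).offDiag.card : ℝ) := by
      rw [Finset.offDiag_card]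
      simp only [Finset.card_univ, Fintype.card_fin]
      rw [Nat.cast_sub (Nat.le_mul_self h)]
      push_cast; ring
    rw [e2, ← nsmul_eq_mul]
    apply Finset.card_nsmul_le_sum
    rintro ⟨i, j⟩ hp
    have hij : i ≠ j := by simpa [Finset.mem_offDiag] using hp
    rw [← Finset.sum_filter, Finset.sum_const, nsmul_eq_mul, mul_one]
    simp only
    have hcov : (Finset.univ.filter (fun χ : Fin h → Fin q => ∀ a ∈ ({i, j} : Finset (Fin h)), χ a = z)) ⊆
        (Finset.univ.filter (fun χ : Fin h → Fin q => i ∈ J χ ∧ j ∈ J χ ∧ Disjoint (F i j) (J χ))) ∪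
        (F i j).biUnion (fun k => Finset.univ.filter
          (fun χ : Fin h → Fin q => ∀ a ∈ ({k, i, j} : Finset (Fin h)), χ a = z)) := by
      intro χ hχ
      simp only [Finset.mem_filter, Finset.mem_univ, true_and, Finset.mem_insert,
        Finset.mem_singleton, forall_eq_or_imp, forall_eq] at hχ
      by_cases hd : Disjoint (F i j) (J χ)
      · apply Finset.mem_union_left
        simp [hJ, hχ, hd]
      · apply Finset.mem_union_right
        rw [Finset.not_disjoint_iff] at hd
        obtain ⟨k, hk, hk'⟩ := hd
        rw [Finset.mem_biUnion]
        refine ⟨k, hk, ?_⟩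
        simp [hχ, (hJ χ k).1 hk']
    have hcard := (Finset.card_le_card hcov).trans ((Finset.card_union_le _ _).trans
      (Nat.add_le_add_left Finset.card_biUnion_le _))
    have hcr : ((Finset.univ.filter (fun χ : Fin h → Fin q => ∀ a ∈ ({i, j} : Finset (Fin h)), χ a = z)).card : ℝ)
      ≤ ((Finset.univ.filter (fun χ : Fin h → Fin q => i ∈ J χ ∧ j ∈ J χ ∧ Disjoint (F i j) (J χ))).card : ℝ)
        + ∑ k ∈ F i j, ((Finset.univ.filter
          (fun χ : Fin h → Fin q => ∀ a ∈ ({k, i, j} : Finset (Fin h)), χ a = z)).card : ℝ) := by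
      exact_mod_cast hcard
    have c1 := cnt_card h q z {i, j}
    rw [Finset.card_pair hij] at c1
    have c2 : ∀ k ∈ F i j, ((Finset.univ.filter
          (fun χ : Fin h → Fin q => ∀ a ∈ ({k, i, j} : Finset (Fin h)), χ a = z)).card : ℝ) = q ^ h / q ^ 3 := by
      intro k hk
      have c3 := cnt_card h q z {k, i, j}
      have hk3 : ({k, i, j} : Finset (Fin h)).card = 3 := by
        apply Finset.card_eq_three.2
        refine ⟨k, i, j, ?_, ?_, hij, rfl⟩
        · rintro rfl; exact (hFi k j).1 hk
        · rintro rfl; exact (hFi i k).2 hk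
      rw [hk3] at c3
      rw [eq_div_iff (by positivity), c3]
    rw [Finset.sum_congr rfl c2, Finset.sum_const, nsmul_eq_mul] at hcr
    have c1' := (eq_div_iff (by positivity : (q : ℝ) ^ 2 ≠ 0)).2 c1
    rw [c1'] at hcr
    have hFq : ((F i j).card : ℝ) ≤ q / 2 := by
      have : (2 * (F i j).card : ℝ) ≤ q := by exact_mod_cast hF i j hij
      linarith
    have : ((F i j).card : ℝ) * ((q : ℝ) ^ h / q ^ 3) ≤ q / 2 * ((q : ℝ) ^ h / q ^ 3) := by gcongr
    have e3 : (q : ℝ) / 2 * ((q : ℝ) ^ h / q ^ 3) = (q : ℝ) ^ h / (2 * q ^ 2) := by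
      field_simp
    have e4 : (q : ℝ) ^ h / q ^ 2 = 2 * ((q : ℝ) ^ h / (2 * q ^ 2)) := by
      field_simp
    linarith
  have hfin := hL.trans (hsum.trans hR.le)
  have hh : (0 : ℝ) < h := by exact_mod_cast hpos
  have hqh : (0 : ℝ) < (q : ℝ) ^ h := by positivity
  have e5 : ((h : ℝ) * h - h) * ((q : ℝ) ^ h / (2 * q ^ 2)) = (h * (q : ℝ) ^ h / (2 * q ^ 2)) * (h - 1) := by
    ring
  have e6 : 2 * d * (h * ((q : ℝ) ^ h / q)) = (h * (q : ℝ) ^ h / (2 * q ^ 2)) * (4 * d * q) := by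
    field_simp; ring
  rw [e5, e6] at hfin
  have := le_of_mul_le_mul_left hfin (by positivity)
  linarith


theorem sym_choice {ι α : Type} [LinearOrder ι] [Inhabited α] (P : ι → ι → α → α → Prop)
    (hs : ∀ i j a b, P i j a b → P j i b a) (he : ∀ i j, i ≠ j → ∃ a b, P i j a b) :
    ∃ A : ι → ι → α, ∀ i j, i ≠ j → P i j (A i j) (A j i) := by
  classical
  have he' : ∀ i j, ∃ a b, i ≠ j → P i j a b := by
    intro i j
    by_cases h : i = j
    · exact ⟨default, default, fun h' => absurd h h'⟩
    · obtain ⟨a, b, hab⟩ := he i j h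
      exact ⟨a, b, fun _ => hab⟩
  choose f g hfg using he'
  refine ⟨fun i j => if i < j then f i j else g j i, ?_⟩
  intro i j hij
  rcases lt_or_gt_of_ne hij with h | h
  · simp only [if_pos h, if_neg h.asymm]
    exact hfg i j hij
  · simp only [if_pos h, if_neg h.asymm]
    exact hs _ _ _ _ (hfg j i hij.symm)

theorem ply_bound {V : Type} (G : SimpleGraph V) (h : ℕ) (E : Fin h → Set V)
    (x : Fin h → V) (hx : Function.Injective x) (r ω : ℕ) (hω : 1 ≤ ω)
    (ply : ∀ v, {i | v ∈ E i}.ncard ≤ ω)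
    (touch : ∀ i j, i ≠ j → ∃ y z a b, a ≤ r ∧ b ≤ r ∧ Sq G (E i) (x i) y a ∧
      Sq G (E j) (x j) z b ∧ (y = z ∨ G.Adj y z)) (d : ℝ) (hd : 0 ≤ d) (hN : NablaLE G r d) :
    (h : ℝ) ≤ 1 + 16 * d * (((r : ℝ) + 1) * ω) := by
  classical
  obtain ⟨A, hA⟩ := sym_choice (fun (i j : Fin h) (F F' : Finset V) =>
      ((F : Set V) ⊆ E i ∧ x i ∈ F ∧ F.card ≤ r + 1 ∧
        ∀ u ∈ F, ∃ m ≤ r, Sq G (F : Set V) (x i) u m) ∧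
      ((F' : Set V) ⊆ E j ∧ x j ∈ F' ∧ F'.card ≤ r + 1 ∧
        ∀ u ∈ F', ∃ m ≤ r, Sq G (F' : Set V) (x j) u m) ∧
      Disjoint F F' ∧ ∃ u ∈ F, ∃ v ∈ F', G.Adj u v)
    (by
      rintro i j a b ⟨h1, h2, h3, u, hu, v, hv, huv⟩
      exact ⟨h2, h1, h3.symm, v, hv, u, hu, huv.symm⟩)
    (fun i j hij => trim (hx.ne hij) (touch i j hij))
  let Fc : Fin h → Fin h → Finset (Fin h) := fun i j => Finset.univ.filter
    (fun k => k ≠ i ∧ k ≠ j ∧ ∃ u ∈ A i j ∪ A j i, u ∈ E k)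
  have hFc : ∀ i j k, k ∈ Fc i j ↔ (k ≠ i ∧ k ≠ j ∧ ∃ u ∈ A i j ∪ A j i, u ∈ E k) := by
    intro i j k; simp only [Fc, Finset.mem_filter, Finset.mem_univ, true_and]
  have hFs : ∀ i j, Fc i j = Fc j i := by
    intro i j; ext k; rw [hFc, hFc, Finset.union_comm]; tauto
  have key := sampling h (4 * ((r + 1) * ω)) (by positivity) Fc ?_ ?_ d hd ?_
  · push_cast at key; linarith
  · intro i j hij
    have h1 : Fc i j ⊆ (A i j ∪ A j i).biUnion (fun u => Finset.univ.filter (fun k => u ∈ E k)) := by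
      intro k hk
      obtain ⟨_, _, u, hu, huk⟩ := (hFc _ _ _).1 hk
      rw [Finset.mem_biUnion]
      exact ⟨u, hu, by simp [huk]⟩
    have h2 := (Finset.card_le_card h1).trans (Finset.card_biUnion_le_card_mul _ _ ω (by
      intro u _
      have := ply u
      rw [Set.ncard_eq_toFinset_card'] at this
      convert this using 2
      ext k; simp))
    have h3 := Finset.card_union_le (A i j) (A j i)
    have h4 := (hA i j hij).1.2.2.1
    have h5 := (hA i j hij).2.1.2.2.1
    have h6 : (A i j ∪ A j i).card * ω ≤ (2 * (r + 1)) * ω := Nat.mul_le_mul_right _ (by omega)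
    nlinarith
  · intro i j
    constructor
    · rw [hFc]; tauto
    · rw [hFc]; tauto
  · intro J
    let W := {i : Fin h // i ∈ J ∧ ∃ j ∈ J, j ≠ i ∧ Disjoint (Fc i j) J}
    let H : SimpleGraph W :=
      { Adj := fun a b => a.1 ≠ b.1 ∧ Disjoint (Fc a.1 b.1) J
        symm := ⟨fun a b hab => ⟨hab.1.symm, by rw [hFs]; exact hab.2⟩⟩
        loopless := ⟨fun a ha => ha.1 rfl⟩ }
    have hminor : IsShallowMinor G H r := by
      refine ⟨fun i => {u | ∃ j ∈ J, j ≠ i.1 ∧ Disjoint (Fc i.1 j) J ∧ u ∈ A i.1 j}, ?_, ?_, ?_⟩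
      · intro a b hab
        have hab' : a.1 ≠ b.1 := fun e => hab (Subtype.ext e)
        rw [Set.disjoint_left]
        rintro u ⟨j, hj, hja, hdj, huj⟩ ⟨j', hj', hjb, hdj', huj'⟩
        have hua : u ∈ E a.1 := (hA a.1 j hja.symm).1.1 huj
        have hub : u ∈ E b.1 := (hA b.1 j' hjb.symm).1.1 huj'
        have e1 : b.1 = j := by
          by_contra hne
          exact Finset.disjoint_left.1 hdj
            ((hFc _ _ _).2 ⟨hab'.symm, hne, u, Finset.mem_union_left _ huj, hub⟩) b.2.1
        have e2 : a.1 = j' := by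
          by_contra hne
          exact Finset.disjoint_left.1 hdj'
            ((hFc _ _ _).2 ⟨hab', hne, u, Finset.mem_union_left _ huj', hua⟩) a.2.1
        subst e1
        subst e2
        exact Finset.disjoint_left.1 (hA a.1 b.1 hab').2.2.1 huj huj'
      · intro i
        obtain ⟨j0, hj0, hji0, hd0⟩ := i.2.2
        refine ⟨⟨x i.1, j0, hj0, hji0, hd0, (hA i.1 j0 hji0.symm).1.2.1⟩, ?_⟩
        rintro ⟨v, hvv⟩
        obtain ⟨j, hj, hji, hdj, hv⟩ := hvv
        obtain ⟨m, hm, hs⟩ := (hA i.1 j hji.symm).1.2.2.2 v hv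
        have hs' : Sq G {u | ∃ j ∈ J, j ≠ i.1 ∧ Disjoint (Fc i.1 j) J ∧ u ∈ A i.1 j} (x i.1) v m := by
          refine hs.mono ?_
          intro u hu
          exact ⟨j, hj, hji, hdj, hu⟩
        obtain ⟨h1, h2, w, hw⟩ := hs'.reach
        exact ⟨w.reachable, (SimpleGraph.dist_le w).trans (by omega)⟩
      · intro a b hab
        obtain ⟨hne, hdis⟩ := hab
        obtain ⟨u, hu, v, hv, huv⟩ := (hA a.1 b.1 hne).2.2.2
        have hdis' : Disjoint (Fc b.1 a.1) J := by rw [hFs]; exact hdis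
        exact ⟨u, ⟨b.1, b.2.1, hne.symm, hdis, hu⟩, v, ⟨a.1, a.2.1, hne, hdis', hv⟩, huv⟩
    have hle := hN W H hminor
    have hWc : (Fintype.card W : ℝ) ≤ J.card := by
      have : Fintype.card W ≤ Fintype.card {i // i ∈ J} :=
        Fintype.card_le_of_injective (fun i : W => (⟨i.1, i.2.1⟩ : {i // i ∈ J}))
          (fun a b hab => Subtype.ext (by simpa using hab))
      rw [Fintype.card_coe] at this
      exact_mod_cast this
    have hdart : (Finset.univ.filter (fun p : Fin h × Fin h => p.1 ≠ p.2 ∧ p.1 ∈ J ∧ p.2 ∈ J ∧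
        Disjoint (Fc p.1 p.2) J)).card ≤ Fintype.card H.Dart := by
      rw [← Fintype.card_coe]
      refine Fintype.card_le_of_injective (fun p => ?_) ?_
      · have hp := p.2
        simp only [Finset.mem_filter, Finset.mem_univ, true_and] at hp
        exact ⟨(⟨p.1.1, hp.2.1, p.1.2, hp.2.2.1, hp.1.symm, hp.2.2.2⟩,
          ⟨p.1.2, hp.2.2.1, p.1.1, hp.2.1, hp.1, hFs p.1.1 p.1.2 ▸ hp.2.2.2⟩), hp.1, hp.2.2.2⟩
      · rintro ⟨⟨a, b⟩, hab⟩ ⟨⟨a', b'⟩, hab'⟩ e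
        simp only [SimpleGraph.Dart.mk.injEq, Prod.mk.injEq] at e
        have e1 : a = a' := congrArg Subtype.val e.1
        have e2 : b = b' := congrArg Subtype.val e.2
        subst e1
        subst e2
        rfl
    rw [SimpleGraph.dart_card_eq_twice_card_edges] at hdart
    have hec : H.edgeSet.ncard = H.edgeFinset.card := by
      rw [← SimpleGraph.coe_edgeFinset, Set.ncard_coe_finset]
    rw [← hec] at hdart
    have hdr : ((Finset.univ.filter (fun p : Fin h × Fin h => p.1 ≠ p.2 ∧ p.1 ∈ J ∧ p.2 ∈ J ∧
        Disjoint (Fc p.1 p.2) J)).card : ℝ) ≤ 2 * (H.edgeSet.ncard : ℝ) := by exact_mod_cast hdart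
    have : d * (Fintype.card W : ℝ) ≤ d * J.card := mul_le_mul_of_nonneg_left hWc hd
    linarith


open Classical in
noncomputable def nb {V : Type} (H : SimpleGraph V) (U A : Finset V) : Finset V :=
  U.filter (fun y => y ∉ A ∧ ∃ x ∈ A, H.Adj x y)

theorem mem_nb {V : Type} {H : SimpleGraph V} {U A : Finset V} {y : V} :
    y ∈ nb H U A ↔ y ∈ U ∧ y ∉ A ∧ ∃ x ∈ A, H.Adj x y := by
  simp [nb]

structure IsSt {V : Type} (H : SimpleGraph V) (U : Finset V) (h q r : ℕ) (ψ : ℝ)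
    (𝒞 : Finset (Finset V)) (T : Finset V) : Prop where
  sub : ∀ C ∈ 𝒞, C ⊆ U
  size : ∀ C ∈ 𝒞, C.card ≤ q
  shal : ∀ C ∈ 𝒞, ∃ x ∈ C, ∀ y ∈ C, ∃ m ≤ r, Sq H (C : Set V) x y m
  dis : ∀ C ∈ 𝒞, ∀ C' ∈ 𝒞, C ≠ C' → Disjoint C C'
  adj : ∀ C ∈ 𝒞, ∀ C' ∈ 𝒞, C ≠ C' → ∃ u ∈ C, ∃ v ∈ C', H.Adj u v
  card : 𝒞.card ≤ h
  Tsub : T ⊆ U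
  Tdis : ∀ C ∈ 𝒞, Disjoint T C
  Tcard : 3 * T.card ≤ 2 * U.card
  Tnb : ∀ W : Finset V, W ⊆ U → (∀ C ∈ 𝒞, Disjoint W C) → ((nb H W T).card : ℝ) ≤ ψ / 2 * T.card

/-- balls in R -/
theorem ball_grow {V : Type} (H : SimpleGraph V) (R : Finset V) (ψ M : ℝ) (hψ : 0 < ψ)
    (hexp : ∀ A ⊆ R, A.Nonempty → (A.card : ℝ) ≤ M → ψ / 2 * A.card ≤ (nb H R A).card)
    (v : V) (hv : v ∈ R) (n : ℕ) :
    ∃ A ⊆ R, (∀ y ∈ A, ∃ m ≤ n, Sq H (R : Set V) v y m) ∧ A.Nonempty ∧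
      (M < A.card ∨ (1 + ψ / 2) ^ n ≤ (A.card : ℝ)) := by
  classical
  induction n with
  | zero =>
    refine ⟨{v}, by simpa using hv, ?_, by simp, Or.inr (by simp)⟩
    intro y hy
    have : y = v := by simpa using hy
    subst this
    exact ⟨0, le_rfl, .refl hv⟩
  | succ n ih =>
    obtain ⟨A, hA, hs, hne, hc⟩ := ih
    by_cases hM : M < A.card
    · exact ⟨A, hA, fun y hy => (hs y hy).imp fun m hm => ⟨by omega, hm.2⟩, hne, Or.inl hM⟩
    · have hc' := hc.resolve_left hM
      have hdis : Disjoint A (nb H R A) := by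
        rw [Finset.disjoint_left]
        intro y hy hy'
        exact (mem_nb.1 hy').2.1 hy
      refine ⟨A ∪ nb H R A, ?_, ?_, hne.mono Finset.subset_union_left, Or.inr ?_⟩
      · apply Finset.union_subset hA
        intro y hy
        exact (mem_nb.1 hy).1
      · intro y hy
        rcases Finset.mem_union.1 hy with hy | hy
        · obtain ⟨m, hm, h'⟩ := hs y hy
          exact ⟨m, by omega, h'⟩
        · obtain ⟨h1, h2, x, hx, hxy⟩ := mem_nb.1 hy
          obtain ⟨m, hm, h'⟩ := hs x hx
          exact ⟨m + 1, by omega, h'.step hxy h1⟩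
      · rw [Finset.card_union_of_disjoint hdis]
        push_cast
        have := hexp A hA hne (not_lt.1 hM)
        rw [pow_succ]
        nlinarith

theorem clique_of_expander {V : Type} [Fintype V] (H : SimpleGraph V) (U : Finset V) (ψ : ℝ)
    (hψ : 0 < ψ) (h ρ : ℕ) (hρ : (U.card : ℝ) < (1 + ψ / 2) ^ ρ) (hU : 0 < U.card)
    (hsz : 24 * (h : ℝ) ^ 2 * (2 * ρ + 1) ≤ ψ * U.card)
    (hsz2 : 12 * (h * (h * (2 * ρ + 1))) ≤ U.card)
    (hexp : ∀ A ⊆ U, A.Nonempty → 3 * A.card ≤ 2 * U.card → ψ * A.card ≤ (nb H U A).card) :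
    ∃ 𝒞 : Finset (Finset V), 𝒞.card = h ∧
      (∀ C ∈ 𝒞, C ⊆ U) ∧
      (∀ C ∈ 𝒞, ∃ x ∈ C, ∀ y ∈ C, ∃ m ≤ 2 * ρ, Sq H (C : Set V) x y m) ∧
      (∀ C ∈ 𝒞, ∀ C' ∈ 𝒞, C ≠ C' → Disjoint C C') ∧
      (∀ C ∈ 𝒞, ∀ C' ∈ 𝒞, C ≠ C' → ∃ u ∈ C, ∃ v ∈ C', H.Adj u v) := by
  classical
  set q := h * (2 * ρ + 1) with hq
  let P : Finset (Finset V) × Finset V → Prop := fun s => IsSt H U h q (2 * ρ) ψ s.1 s.2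
  have hP0 : P (∅, ∅) := by
    refine ⟨by simp, by simp, by simp, by simp, by simp, by simp, by simp, by simp, by simp, ?_⟩
    intro W _ _
    have : nb H W ∅ = ∅ := by
      ext y; simp [mem_nb]
    simp [this]
  obtain ⟨⟨𝒞, T⟩, hmem, hmax⟩ := Finset.exists_max_image (Finset.univ.filter P)
    (fun s => s.2.card * (h + 1) + s.1.card) ⟨_, Finset.mem_filter.2 ⟨Finset.mem_univ _, hP0⟩⟩
  have hst : IsSt H U h q (2 * ρ) ψ 𝒞 T := (Finset.mem_filter.1 hmem).2
  have hmax' : ∀ 𝒞' T', IsSt H U h q (2 * ρ) ψ 𝒞' T' →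
      T'.card * (h + 1) + 𝒞'.card ≤ T.card * (h + 1) + 𝒞.card := by
    intro 𝒞' T' h'
    exact hmax (𝒞', T') (Finset.mem_filter.2 ⟨Finset.mem_univ _, h'⟩)
  set Y := 𝒞.biUnion id with hY
  have memY : ∀ y, y ∈ Y ↔ ∃ C ∈ 𝒞, y ∈ C := by intro y; simp [hY]
  have hYc : Y.card ≤ h * q := by
    have := Finset.card_biUnion_le_card_mul 𝒞 id q hst.size
    exact this.trans (Nat.mul_le_mul_right _ hst.card)
  have hYr : (Y.card : ℝ) ≤ (h : ℝ) ^ 2 * (2 * ρ + 1) := by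
    have : (Y.card : ℝ) ≤ ((h * q : ℕ) : ℝ) := by exact_mod_cast hYc
    refine this.trans (le_of_eq ?_)
    rw [hq]; push_cast; ring
  -- T is small
  have hTs : 12 * T.card ≤ U.card := by
    rcases T.eq_empty_or_nonempty with h0 | h0
    · simp [h0]
    have h1 := hexp T hst.Tsub h0 hst.Tcard
    have h2 := hst.Tnb (U \ Y) Finset.sdiff_subset (by
      intro C hC
      rw [Finset.disjoint_left]
      intro y hy hyC
      exact (Finset.mem_sdiff.1 hy).2 ((memY y).2 ⟨C, hC, hyC⟩))
    have h3 : nb H U T ⊆ Y ∪ nb H (U \ Y) T := by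
      intro y hy
      obtain ⟨a, b, c⟩ := mem_nb.1 hy
      by_cases hyY : y ∈ Y
      · exact Finset.mem_union_left _ hyY
      · exact Finset.mem_union_right _ (mem_nb.2 ⟨Finset.mem_sdiff.2 ⟨a, hyY⟩, b, c⟩)
    have h4 := (Finset.card_le_card h3).trans (Finset.card_union_le _ _)
    have h5 : ((nb H U T).card : ℝ) ≤ Y.card + (nb H (U \ Y) T).card := by exact_mod_cast h4
    have h6 : ψ * (12 * T.card) ≤ ψ * U.card := by nlinarith
    have h7 := le_of_mul_le_mul_left h6 hψ
    exact_mod_cast h7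
  set R := (U \ Y) \ T with hR
  have memR : ∀ y, y ∈ R ↔ y ∈ U ∧ y ∉ Y ∧ y ∉ T := by
    intro y; simp [hR, and_assoc]
  have hRU : R ⊆ U := fun y hy => ((memR y).1 hy).1
  -- each cluster has a neighbour in R
  have hnbR : ∀ C ∈ 𝒞, ∃ w ∈ R, ∃ u ∈ C, H.Adj u w := by
    intro C hC
    by_contra hcon
    push Not at hcon
    have hCne : 0 < C.card := by
      obtain ⟨x, hx, _⟩ := hst.shal C hC
      exact Finset.card_pos.2 ⟨x, hx⟩
    have hhpos : 1 ≤ h := le_trans (Finset.card_pos.2 ⟨C, hC⟩) hst.card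
    have hC12 : 12 * C.card ≤ U.card := by
      have h1 := hst.size C hC
      have : q ≤ h * q := Nat.le_mul_of_pos_left _ hhpos
      omega
    have hTC : (T ∪ C).card = T.card + C.card := Finset.card_union_of_disjoint (hst.Tdis C hC)
    have hnew : IsSt H U h q (2 * ρ) ψ (𝒞.erase C) (T ∪ C) := by
      refine ⟨fun C' h' => hst.sub C' (Finset.mem_of_mem_erase h'),
        fun C' h' => hst.size C' (Finset.mem_of_mem_erase h'),
        fun C' h' => hst.shal C' (Finset.mem_of_mem_erase h'),
        fun C' h' C'' h'' => hst.dis C' (Finset.mem_of_mem_erase h') C'' (Finset.mem_of_mem_erase h''),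
        fun C' h' C'' h'' => hst.adj C' (Finset.mem_of_mem_erase h') C'' (Finset.mem_of_mem_erase h''),
        (Finset.card_erase_le).trans hst.card, Finset.union_subset hst.Tsub (hst.sub C hC),
        ?_, ?_, ?_⟩
      · intro C' h'
        rw [Finset.disjoint_union_left]
        exact ⟨hst.Tdis C' (Finset.mem_of_mem_erase h'),
          hst.dis C hC C' (Finset.mem_of_mem_erase h') (Finset.ne_of_mem_erase h').symm⟩
      · rw [hTC]; omega
      · intro W hW hWd
        have hsub : nb H W (T ∪ C) ⊆ nb H (W \ C) T := by
          intro y hy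
          obtain ⟨a, b, x, hx, hxy⟩ := mem_nb.1 hy
          rw [Finset.mem_union, not_or] at b
          refine mem_nb.2 ⟨Finset.mem_sdiff.2 ⟨a, b.2⟩, b.1, ?_⟩
          rcases Finset.mem_union.1 hx with hx | hx
          · exact ⟨x, hx, hxy⟩
          · exfalso
            refine hcon y ((memR y).2 ⟨hW a, ?_, b.1⟩) x hx hxy
            intro hyY
            obtain ⟨C', hC', hyC'⟩ := (memY y).1 hyY
            by_cases e : C' = C
            · subst e; exact b.2 hyC'
            · exact Finset.disjoint_left.1 (hWd C' (Finset.mem_erase.2 ⟨e, hC'⟩)) a hyC'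
        have h1 := hst.Tnb (W \ C) (Finset.sdiff_subset.trans hW) (by
          intro C' hC'
          by_cases e : C' = C
          · subst e; exact Finset.sdiff_disjoint
          · exact (hWd C' (Finset.mem_erase.2 ⟨e, hC'⟩)).mono_left Finset.sdiff_subset)
        have h2 : ((nb H W (T ∪ C)).card : ℝ) ≤ (nb H (W \ C) T).card := by
          exact_mod_cast Finset.card_le_card hsub
        rw [hTC]; push_cast
        nlinarith [(Nat.cast_nonneg C.card : (0 : ℝ) ≤ C.card)]
    have := hmax' _ _ hnew
    rw [hTC, Finset.card_erase_of_mem hC] at this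
    have h1 : 1 ≤ 𝒞.card := Finset.card_pos.2 ⟨C, hC⟩
    nlinarith [hst.card]
  -- R is an expander
  have hRexp : ∀ A ⊆ R, A.Nonempty → (A.card : ℝ) ≤ 7 / 12 * U.card →
      ψ / 2 * A.card ≤ (nb H R A).card := by
    intro A hA hAne hAc
    by_contra hcon
    push Not at hcon
    have hAT : Disjoint T A := by
      rw [Finset.disjoint_left]
      intro y hy hyA
      exact ((memR y).1 (hA hyA)).2.2 hy
    have hTA : (T ∪ A).card = T.card + A.card := Finset.card_union_of_disjoint hAT
    have hAc' : 12 * A.card ≤ 7 * U.card := by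
      have : (12 * A.card : ℝ) ≤ 7 * U.card := by linarith
      exact_mod_cast this
    have hnew : IsSt H U h q (2 * ρ) ψ 𝒞 (T ∪ A) := by
      refine ⟨hst.sub, hst.size, hst.shal, hst.dis, hst.adj, hst.card,
        Finset.union_subset hst.Tsub (hA.trans hRU), ?_, ?_, ?_⟩
      · intro C hC
        rw [Finset.disjoint_union_left]
        refine ⟨hst.Tdis C hC, ?_⟩
        rw [Finset.disjoint_left]
        intro y hy hyC
        exact ((memR y).1 (hA hy)).2.1 ((memY y).2 ⟨C, hC, hyC⟩)
      · rw [hTA]; omega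
      · intro W hW hWd
        have hsub : nb H W (T ∪ A) ⊆ nb H W T ∪ nb H R A := by
          intro y hy
          obtain ⟨a, b, x, hx, hxy⟩ := mem_nb.1 hy
          rw [Finset.mem_union, not_or] at b
          rcases Finset.mem_union.1 hx with hx | hx
          · exact Finset.mem_union_left _ (mem_nb.2 ⟨a, b.1, x, hx, hxy⟩)
          · refine Finset.mem_union_right _ (mem_nb.2 ⟨(memR y).2 ⟨hW a, ?_, b.1⟩, b.2, x, hx, hxy⟩)
            intro hyY
            obtain ⟨C', hC', hyC'⟩ := (memY y).1 hyY
            exact Finset.disjoint_left.1 (hWd C' hC') a hyC'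
        have h1 := hst.Tnb W hW hWd
        have h2 : ((nb H W (T ∪ A)).card : ℝ) ≤ (nb H W T).card + (nb H R A).card := by
          exact_mod_cast (Finset.card_le_card hsub).trans (Finset.card_union_le _ _)
        rw [hTA]; push_cast
        linarith
    have := hmax' _ _ hnew
    rw [hTA] at this
    have h1 := Finset.card_pos.2 hAne
    nlinarith
  -- short connections
  have hconn : ∀ v ∈ R, ∀ w ∈ R, ∃ m ≤ 2 * ρ, Sq H (R : Set V) v w m := by
    intro v hv w hw
    have big : ∀ v ∈ R, ∃ A ⊆ R, (∀ y ∈ A, ∃ m ≤ ρ, Sq H (R : Set V) v y m) ∧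
        7 / 12 * (U.card : ℝ) < A.card := by
      intro v hv
      obtain ⟨A, hA, hs, hne, hc⟩ := ball_grow H R ψ (7 / 12 * U.card) hψ hRexp v hv ρ
      refine ⟨A, hA, hs, ?_⟩
      rcases hc with hc | hc
      · exact hc
      · have : (A.card : ℝ) ≤ U.card := by exact_mod_cast Finset.card_le_card (hA.trans hRU)
        linarith
    obtain ⟨A, hA, hs, hc⟩ := big v hv
    obtain ⟨B, hB, hs', hc'⟩ := big w hw
    have hnd : ¬ Disjoint A B := by
      intro hd
      have h1 := Finset.card_union_of_disjoint hd
      have h2 := Finset.card_le_card (Finset.union_subset (hA.trans hRU) (hB.trans hRU))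
      rw [h1] at h2
      have h3 : (A.card : ℝ) + B.card ≤ U.card := by exact_mod_cast h2
      have h4 : (0 : ℝ) < U.card := by exact_mod_cast hU
      linarith
    obtain ⟨y, hy, hy'⟩ := Finset.not_disjoint_iff.1 hnd
    obtain ⟨m, hm, h1⟩ := hs y hy
    obtain ⟨m', hm', h1'⟩ := hs' y hy'
    exact ⟨m + m', by omega, h1.trans h1'.symm⟩
  refine ⟨𝒞, ?_, hst.sub, hst.shal, hst.dis, hst.adj⟩
  by_contra hne
  have hlt : 𝒞.card < h := lt_of_le_of_ne hst.card hne
  have hRne : R.Nonempty := by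
    by_contra hcon
    rw [Finset.not_nonempty_iff_eq_empty] at hcon
    have h1 : U ⊆ Y ∪ T := by
      intro y hy
      by_contra hy'
      rw [Finset.mem_union, not_or] at hy'
      have := (memR y).2 ⟨hy, hy'⟩
      rw [hcon] at this
      simp at this
    have h2 := (Finset.card_le_card h1).trans (Finset.card_union_le _ _)
    omega
  obtain ⟨v, hv⟩ := hRne
  have : Nonempty V := ⟨v⟩
  choose! w hwR hwC using hnbR
  have hpath : ∀ C ∈ 𝒞, ∃ F : Finset V, (F : Set V) ⊆ R ∧ v ∈ F ∧ w C ∈ F ∧ F.card ≤ 2 * ρ + 1 ∧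
      ∀ u ∈ F, ∃ m ≤ 2 * ρ, Sq H (F : Set V) v u m := by
    intro C hC
    obtain ⟨m, hm, hs⟩ := hconn v hv (w C) (hwR C hC)
    obtain ⟨F, h1, h2, h3, h4, h5⟩ := hs.path
    refine ⟨F, h1, h2, h3, by omega, ?_⟩
    intro u hu
    obtain ⟨m', hm', _, h6⟩ := h5 u hu
    exact ⟨m', by omega, h6⟩
  choose! F hF1 hF2 hF3 hF4 hF5 using hpath
  set N : Finset V := insert v (𝒞.biUnion F) with hN
  have hNR : N ⊆ R := by
    intro y hy
    rcases Finset.mem_insert.1 hy with rfl | hy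
    · exact hv
    · obtain ⟨C, hC, hyC⟩ := Finset.mem_biUnion.1 hy
      exact hF1 C hC hyC
  have hFN : ∀ C ∈ 𝒞, F C ⊆ N := fun C hC =>
    (Finset.subset_biUnion_of_mem F hC).trans (Finset.subset_insert _ _)
  have hNd : ∀ C ∈ 𝒞, Disjoint N C := by
    intro C hC
    rw [Finset.disjoint_left]
    intro y hy hyC
    exact ((memR y).1 (hNR hy)).2.1 ((memY y).2 ⟨C, hC, hyC⟩)
  have hvN : v ∈ N := Finset.mem_insert_self _ _
  have hN𝒞 : N ∉ 𝒞 := by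
    intro hc
    have := hNd N hc
    exact Finset.disjoint_left.1 this hvN hvN
  have hNadj : ∀ C ∈ 𝒞, ∃ u ∈ C, ∃ y ∈ N, H.Adj u y := by
    intro C hC
    obtain ⟨u, hu, huw⟩ := hwC C hC
    exact ⟨u, hu, w C, hFN C hC (hF3 C hC), huw⟩
  have hnew : IsSt H U h q (2 * ρ) ψ (insert N 𝒞) T := by
    refine ⟨?_, ?_, ?_, ?_, ?_, ?_, hst.Tsub, ?_, hst.Tcard, ?_⟩
    · intro C hC
      rcases Finset.mem_insert.1 hC with rfl | hC
      · exact hNR.trans hRU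
      · exact hst.sub C hC
    · intro C hC
      rcases Finset.mem_insert.1 hC with rfl | hC
      · have h1 := Finset.card_insert_le v (𝒞.biUnion F)
        have h2 := Finset.card_biUnion_le_card_mul 𝒞 F (2 * ρ + 1) hF4
        have h3 : (𝒞.card + 1) * (2 * ρ + 1) ≤ q := Nat.mul_le_mul_right _ hlt
        rw [hN]
        nlinarith
      · exact hst.size C hC
    · intro C hC
      rcases Finset.mem_insert.1 hC with rfl | hC
      · refine ⟨v, hvN, ?_⟩
        intro y hy
        rcases Finset.mem_insert.1 hy with rfl | hy
        · exact ⟨0, by omega, .refl (by simpa using hvN)⟩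
        · obtain ⟨C, hC, hyC⟩ := Finset.mem_biUnion.1 hy
          obtain ⟨m, hm, hs⟩ := hF5 C hC y hyC
          exact ⟨m, hm, hs.mono (by exact_mod_cast hFN C hC)⟩
      · exact hst.shal C hC
    · intro C hC C' hC' hne'
      rcases Finset.mem_insert.1 hC with rfl | hC <;> rcases Finset.mem_insert.1 hC' with rfl | hC'
      · exact absurd rfl hne'
      · exact hNd C' hC'
      · exact (hNd C hC).symm
      · exact hst.dis C hC C' hC' hne'
    · intro C hC C' hC' hne'
      rcases Finset.mem_insert.1 hC with rfl | hC <;> rcases Finset.mem_insert.1 hC' with rfl | hC'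
      · exact absurd rfl hne'
      · obtain ⟨u, hu, y, hy, huy⟩ := hNadj C' hC'
        exact ⟨y, hy, u, hu, huy.symm⟩
      · exact hNadj C hC
      · exact hst.adj C hC C' hC' hne'
    · rw [Finset.card_insert_of_notMem hN𝒞]; omega
    · intro C hC
      rcases Finset.mem_insert.1 hC with rfl | hC
      · rw [Finset.disjoint_right]
        intro y hy
        exact ((memR y).1 (hNR hy)).2.2
      · exact hst.Tdis C hC
    · intro W hW hWd
      exact hst.Tnb W hW fun C hC => hWd C (Finset.mem_insert_of_mem hC)
  have := hmax' _ _ hnew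
  rw [Finset.card_insert_of_notMem hN𝒞] at this
  omega


/-- auxiliary exchange graph -/
def HG {V : Type} (G : SimpleGraph V) (X S : Set V) (cL : V → Finset V) : SimpleGraph V where
  Adj x y := x ≠ y ∧ x ∈ X ∧ y ∈ X ∧ (G.Adj x y ∨
    ∃ v, (x ∈ cL v ∧ y ∈ S ∧ (y = v ∨ G.Adj y v)) ∨ (y ∈ cL v ∧ x ∈ S ∧ (x = v ∨ G.Adj x v)))
  symm := ⟨by
    rintro x y ⟨h1, h2, h3, h4⟩
    refine ⟨h1.symm, h3, h2, ?_⟩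
    rcases h4 with h4 | ⟨v, h4⟩
    · exact Or.inl h4.symm
    · exact Or.inr ⟨v, h4.symm⟩⟩
  loopless := ⟨fun x hx => hx.1 rfl⟩

theorem Sq.half {V : Type} {G : SimpleGraph V} {E : Set V} {x y v : V} {m : ℕ}
    (h : Sq G E x y m) (hv : v ∈ E) (hyv : y = v ∨ G.Adj y v) : ∃ m' ≤ m + 1, Sq G E x v m' := by
  rcases hyv with rfl | hyv
  · exact ⟨m, by omega, h⟩
  · exact ⟨m + 1, le_rfl, h.step hyv hv⟩

theorem clique_bound {V : Type} (G : SimpleGraph V) (X S : Set V) (cL : V → Finset V) (Δ : ℕ)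
    (hcL : ∀ v, ∀ l ∈ cL v, l = v ∨ G.Adj l v) (hcLc : ∀ v, (cL v).card ≤ Δ)
    (𝒞 : Finset (Finset V)) (R : ℕ)
    (hsh : ∀ C ∈ 𝒞, ∃ x ∈ C, ∀ y ∈ C, ∃ m ≤ R, Sq (HG G X S cL) (C : Set V) x y m)
    (hdis : ∀ C ∈ 𝒞, ∀ C' ∈ 𝒞, C ≠ C' → Disjoint C C')
    (hadj : ∀ C ∈ 𝒞, ∀ C' ∈ 𝒞, C ≠ C' → ∃ u ∈ C, ∃ v ∈ C', (HG G X S cL).Adj u v)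
    (d : ℝ) (hd : 0 ≤ d) (hN : NablaLE G (2 * R + 1) d) :
    (𝒞.card : ℝ) ≤ 1 + 16 * d * ((((2 * R + 1 : ℕ) : ℝ) + 1) * ((Δ + 1 : ℕ) : ℝ)) := by
  classical
  let e : 𝒞 ≃ Fin 𝒞.card := 𝒞.equivFin
  let C : Fin 𝒞.card → Finset V := fun i => (e.symm i).1
  have hC : ∀ i, C i ∈ 𝒞 := fun i => (e.symm i).2
  have hCinj : ∀ i j, i ≠ j → C i ≠ C j := by
    intro i j hij h
    exact hij (e.symm.injective (Subtype.ext h))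
  have hCd : ∀ i j, i ≠ j → Disjoint (C i) (C j) := fun i j hij =>
    hdis _ (hC i) _ (hC j) (hCinj i j hij)
  choose x hxC hx using fun i => hsh (C i) (hC i)
  let E : Fin 𝒞.card → Set V := fun i => {v | ∃ l ∈ insert v (cL v), l ∈ C i}
  have hCE : ∀ i, ∀ v ∈ C i, v ∈ E i := fun i v hv => ⟨v, by simp, hv⟩
  have hlE : ∀ i v l, l ∈ cL v → l ∈ C i → v ∈ E i := fun i v l h1 h2 => ⟨l, by simp [h1], h2⟩
  have lift : ∀ i y n, Sq (HG G X S cL) (C i : Set V) (x i) y n →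
      ∃ m ≤ 2 * n, Sq G (E i) (x i) y m := by
    intro i y n hs
    induction hs with
    | refl h => exact ⟨0, by omega, .refl (hCE i _ h)⟩
    | @step y z n hs ha hz ih =>
      obtain ⟨m, hm, h1⟩ := ih
      have hy := hs.right_mem
      obtain ⟨_, _, _, h2⟩ := ha
      have hzE := hCE i z hz
      rcases h2 with h2 | ⟨v, h2 | h2⟩
      · exact ⟨m + 1, by omega, h1.step h2 hzE⟩
      · have hv := hlE i v y h2.1 hy
        obtain ⟨m', hm', h3⟩ := h1.half hv (hcL v y h2.1)
        obtain ⟨m'', hm'', h4⟩ := h3.half hzE (h2.2.2.imp Eq.symm (fun h => h.symm))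
        exact ⟨m'', by omega, h4⟩
      · have hv := hlE i v z h2.1 hz
        obtain ⟨m', hm', h3⟩ := h1.half hv h2.2.2
        obtain ⟨m'', hm'', h4⟩ := h3.half hzE ((hcL v z h2.1).imp Eq.symm (fun h => h.symm))
        exact ⟨m'', by omega, h4⟩
  refine ply_bound G 𝒞.card E x ?_ (2 * R + 1) (Δ + 1) (by omega) ?_ ?_ d hd hN
  · intro i j hij
    by_contra hne
    exact Finset.disjoint_left.1 (hCd i j hne) (hxC i) (hij ▸ hxC j)
  · intro v
    have h1 : ∀ i ∈ {i | v ∈ E i}, ∃ l, l ∈ insert v (cL v) ∧ l ∈ C i := by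
      intro i hi
      obtain ⟨l, h1, h2⟩ := hi
      exact ⟨l, h1, h2⟩
    have : Nonempty V := ⟨v⟩
    choose! f hf1 hf2 using h1
    have h2 := Set.ncard_le_ncard_of_injOn (s := {i | v ∈ E i}) (t := ((insert v (cL v) : Finset V) : Set V))
      f (fun i hi => hf1 i hi) (by
        intro i hi j hj hij
        by_contra hne
        exact Finset.disjoint_left.1 (hCd i j hne) (hf2 i hi) (hij ▸ hf2 j hj)) (Finset.finite_toSet _)
    rw [Set.ncard_coe_finset] at h2
    exact h2.trans ((Finset.card_insert_le _ _).trans (by have := hcLc v; omega))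
  · intro i j hij
    obtain ⟨y, hy, z, hz, _, _, _, hyz⟩ := hadj _ (hC i) _ (hC j) (hCinj i j hij)
    obtain ⟨n, hn, hsy⟩ := hx i y hy
    obtain ⟨n', hn', hsz⟩ := hx j z hz
    obtain ⟨m, hm, h1⟩ := lift i y n hsy
    obtain ⟨m', hm', h1'⟩ := lift j z n' hsz
    rcases hyz with h2 | ⟨v, h2 | h2⟩
    · exact ⟨y, z, m, m', by omega, by omega, h1, h1', Or.inr h2⟩
    · obtain ⟨m'', hm'', h3⟩ := h1.half (hlE i v y h2.1 hy) (hcL v y h2.1)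
      exact ⟨v, z, m'', m', by omega, by omega, h3, h1', h2.2.2.imp Eq.symm (fun h => h.symm)⟩
    · obtain ⟨m'', hm'', h3⟩ := h1'.half (hlE j v z h2.1 hz) (hcL v z h2.1)
      exact ⟨y, v, m, m'', by omega, by omega, h1, h3, h2.2.2⟩


theorem log_bound (k : ℕ) : ∃ C2 : ℝ, 1 ≤ C2 ∧ ∀ (N : ℕ) (x : ℝ), 1 ≤ N → 0 < x →
    x ^ (2 * k + 6) = N → ((Nat.log 2 N + 1 : ℕ) : ℝ) ^ (2 * k + 3) ≤ C2 * x ^ 2 := by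
  set η : ℝ := 2 / (2 * k + 3) with hη
  have hη0 : 0 < η := by positivity
  -- λ ≤ c x^η
  set c0 : ℝ := (2 * k + 6) / (η * Real.log 2) + 1 with hc0
  have hl2 : 0 < Real.log 2 := Real.log_pos (by norm_num)
  have hc1 : 1 ≤ c0 := by
    have : 0 ≤ (2 * k + 6) / (η * Real.log 2) := by positivity
    linarith
  refine ⟨c0 ^ (2 * k + 3), one_le_pow₀ hc1, ?_⟩
  intro N x hN hx hxN
  have hN1 : (1 : ℝ) ≤ N := by exact_mod_cast hN
  have hx1 : 1 ≤ x := by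
    by_contra h
    have := pow_lt_one₀ hx.le (not_le.1 h) (by omega : 2 * k + 6 ≠ 0)
    linarith
  have h1 : ((Nat.log 2 N : ℕ) : ℝ) * Real.log 2 ≤ Real.log N := by
    rw [← Real.log_pow]
    apply Real.log_le_log (by positivity)
    exact_mod_cast Nat.pow_log_le_self 2 (by omega)
  have h2 : Real.log N = (2 * k + 6) * Real.log x := by
    rw [← hxN, Real.log_pow]; push_cast; ring
  have h3 : Real.log x ≤ x ^ η / η := Real.log_le_rpow_div hx.le hη0
  have h4 : (1 : ℝ) ≤ x ^ η := Real.one_le_rpow hx1 hη0.le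
  have h5 : ((Nat.log 2 N + 1 : ℕ) : ℝ) ≤ c0 * x ^ η := by
    push_cast
    have h6 : ((Nat.log 2 N : ℕ) : ℝ) ≤ (2 * k + 6) / (η * Real.log 2) * x ^ η := by
      rw [div_mul_eq_mul_div, le_div_iff₀ (by positivity)]
      have h7 : ((2 : ℝ) * k + 6) * Real.log x ≤ (2 * k + 6) * (x ^ η / η) := by gcongr
      have h8 : ((Nat.log 2 N : ℕ) : ℝ) * Real.log 2 ≤ (2 * k + 6) * (x ^ η / η) := by linarith
      calc ((Nat.log 2 N : ℕ) : ℝ) * (η * Real.log 2) = (((Nat.log 2 N : ℕ) : ℝ) * Real.log 2) * η := by ring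
        _ ≤ ((2 * k + 6) * (x ^ η / η)) * η := by gcongr
        _ = (2 * k + 6) * x ^ η := by field_simp
    rw [hc0, add_mul, one_mul]
    linarith
  calc ((Nat.log 2 N + 1 : ℕ) : ℝ) ^ (2 * k + 3) ≤ (c0 * x ^ η) ^ (2 * k + 3) := by gcongr
    _ = c0 ^ (2 * k + 3) * x ^ 2 := by
      rw [mul_pow]
      congr 1
      rw [← Real.rpow_natCast, ← Real.rpow_mul hx.le, ← Real.rpow_natCast]
      congr 1
      rw [hη]; push_cast; field_simp

theorem sparse_cut (k Δ : ℕ) (c : ℝ) (hc : 0 < c) :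
    ∃ D : ℝ, 1 ≤ D ∧ ∀ (V : Type) [Fintype V] (G : SimpleGraph V),
      (∀ r : ℕ, NablaLE G r (c * ((r : ℝ) + 1) ^ k)) →
      ∀ (X S : Set V) (cL : V → Finset V), (∀ v, ∀ l ∈ cL v, l = v ∨ G.Adj l v) →
      (∀ v, (cL v).card ≤ Δ) → ∀ (U : Finset V) (x : ℝ), 4 * D ≤ x → x ^ (2 * k + 6) = U.card →
      ∃ A ⊆ U, A.Nonempty ∧ 3 * A.card ≤ 2 * U.card ∧
        ((nb (HG G X S cL) U A).card : ℝ) < D / x * A.card := by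
  obtain ⟨C2, hC2, hlog⟩ := log_bound k
  set B : ℝ := 3 + 16 * c * (Δ + 1) * 6 ^ (k + 1) with hB
  have hB1 : 1 ≤ B := by
    have : 0 ≤ 16 * c * (Δ + 1) * 6 ^ (k + 1) := by positivity
    linarith
  set D : ℝ := 72 * B ^ 2 * 3 ^ (2 * k + 3) * C2 with hD
  have hD1 : 1 ≤ D := by
    have h1 : (1 : ℝ) ≤ B ^ 2 := one_le_pow₀ hB1
    have h2 : (1 : ℝ) ≤ 3 ^ (2 * k + 3) := one_le_pow₀ (by norm_num)
    have h3 : (1 : ℝ) ≤ 72 * B ^ 2 := by linarith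
    have h4 := one_le_mul_of_one_le_of_one_le h3 h2
    exact one_le_mul_of_one_le_of_one_le h4 hC2
  refine ⟨D, hD1, ?_⟩
  intro V _ G hN X S cL hcL hcLc U x hx hxU
  by_contra hcon
  push Not at hcon
  have hx0 : 0 < x := by linarith
  have hUpos : 0 < U.card := by
    have : (0 : ℝ) < U.card := by rw [← hxU]; positivity
    exact_mod_cast this
  set ψ := D / x with hψ
  have hψ0 : 0 < ψ := by positivity
  have hψ1 : ψ ≤ 1 := by
    rw [hψ, div_le_one hx0]; linarith
  set lam := Nat.log 2 U.card + 1 with hlam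
  set ρ := ⌈2 / ψ⌉₊ * lam with hρ
  have hceil1 : 1 ≤ ⌈2 / ψ⌉₊ := Nat.one_le_iff_ne_zero.2 (Nat.ceil_pos.2 (by positivity)).ne'
  have hρ1 : 1 ≤ ρ := Nat.one_le_iff_ne_zero.2 (Nat.mul_ne_zero (by omega) (by omega))
  have hρ1r : (1 : ℝ) ≤ ρ := by exact_mod_cast hρ1
  have hρle : (ρ : ℝ) ≤ 3 / ψ * lam := by
    rw [hρ]; push_cast
    have h1 : (⌈2 / ψ⌉₊ : ℝ) ≤ 2 / ψ + 1 := (Nat.ceil_lt_add_one (by positivity)).le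
    have h2 : 1 ≤ 1 / ψ := by rw [le_div_iff₀ hψ0]; linarith
    have h3 : 3 / ψ = 2 / ψ + 1 / ψ := by ring
    gcongr
    linarith
  have hgrow : (U.card : ℝ) < (1 + ψ / 2) ^ ρ := by
    have h1 : (2 : ℝ) ≤ (1 + ψ / 2) ^ ⌈2 / ψ⌉₊ := by
      have h2 := one_add_mul_le_pow (a := ψ / 2) (by linarith) ⌈2 / ψ⌉₊
      have h3 : 2 / ψ ≤ ⌈2 / ψ⌉₊ := Nat.le_ceil _
      have h4 : 2 / ψ * (ψ / 2) ≤ ⌈2 / ψ⌉₊ * (ψ / 2) := by gcongr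
      have h5 : 2 / ψ * (ψ / 2) = 1 := by field_simp
      linarith
    have h6 : (U.card : ℝ) < 2 ^ lam := by
      exact_mod_cast Nat.lt_pow_succ_log_self (b := 2) (by norm_num) U.card
    calc (U.card : ℝ) < 2 ^ lam := h6
      _ ≤ ((1 + ψ / 2) ^ ⌈2 / ψ⌉₊) ^ lam := by gcongr
      _ = _ := by rw [← pow_mul]
  set bd : ℝ := 1 + 16 * (c * ((((2 * (2 * ρ) + 1 : ℕ) : ℝ)) + 1) ^ k) *
    ((((2 * (2 * ρ) + 1 : ℕ) : ℝ) + 1) * ((Δ + 1 : ℕ) : ℝ)) with hbd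
  have hbd0 : 0 ≤ bd := by positivity
  have hbdle : bd + 2 ≤ B * (ρ : ℝ) ^ (k + 1) := by
    have h1 : bd = 1 + 16 * c * (Δ + 1) * (4 * ρ + 2) ^ (k + 1) := by
      rw [hbd, pow_succ]; push_cast; ring
    have h2 : ((4 : ℝ) * ρ + 2) ^ (k + 1) ≤ (6 * ρ) ^ (k + 1) := by gcongr; linarith
    have h3 : (1 : ℝ) ≤ (ρ : ℝ) ^ (k + 1) := one_le_pow₀ hρ1r
    have h4 : 16 * c * (Δ + 1) * ((4 : ℝ) * ρ + 2) ^ (k + 1) ≤ 16 * c * (Δ + 1) * (6 * ρ) ^ (k + 1) := by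
      gcongr
    rw [h1, hB, add_mul]
    rw [mul_pow] at h4
    nlinarith
  set h := ⌊bd⌋₊ + 1 with hh
  have hhgt : bd < h := by rw [hh]; push_cast; exact Nat.lt_floor_add_one bd
  have hhle : (h : ℝ) ≤ B * (ρ : ℝ) ^ (k + 1) := by
    have := Nat.floor_le hbd0
    rw [hh]; push_cast; linarith
  have hlb := hlog U.card x hUpos hx0 hxU
  have hsz : 24 * (h : ℝ) ^ 2 * (2 * ρ + 1) ≤ ψ * U.card := by
    have e1 : 24 * (h : ℝ) ^ 2 * (2 * ρ + 1) ≤ 24 * (B * (ρ : ℝ) ^ (k + 1)) ^ 2 * (3 * ρ) := by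
      gcongr; linarith
    have e2 : 24 * (B * (ρ : ℝ) ^ (k + 1)) ^ 2 * (3 * ρ) = 72 * B ^ 2 * (ρ : ℝ) ^ (2 * k + 3) := by
      ring
    have e3 : 72 * B ^ 2 * (ρ : ℝ) ^ (2 * k + 3) ≤ 72 * B ^ 2 * (3 / ψ * lam) ^ (2 * k + 3) := by gcongr
    have e4 : 72 * B ^ 2 * (3 / ψ * lam) ^ (2 * k + 3) =
        72 * B ^ 2 * 3 ^ (2 * k + 3) * (lam : ℝ) ^ (2 * k + 3) / ψ ^ (2 * k + 3) := by
      rw [mul_pow, div_pow]; ring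
    have e5 : 72 * B ^ 2 * 3 ^ (2 * k + 3) * (lam : ℝ) ^ (2 * k + 3) / ψ ^ (2 * k + 3) ≤
        72 * B ^ 2 * 3 ^ (2 * k + 3) * (C2 * x ^ 2) / ψ ^ (2 * k + 3) := by gcongr
    have e6 : 72 * B ^ 2 * 3 ^ (2 * k + 3) * (C2 * x ^ 2) / ψ ^ (2 * k + 3) ≤ ψ * U.card := by
      rw [div_le_iff₀ (by positivity)]
      have e7 : ψ * U.card * ψ ^ (2 * k + 3) = D ^ (2 * k + 4) * x ^ 2 := by
        rw [← hxU, hψ]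
        have : (D / x) * x ^ (2 * k + 6) * (D / x) ^ (2 * k + 3) = (D / x) ^ (2 * k + 4) * x ^ (2 * k + 6) := by ring
        rw [this, div_pow, show 2 * k + 6 = (2 * k + 4) + 2 by ring, pow_add x]
        field_simp
        ring
      rw [e7]
      have e8 : D ≤ D ^ (2 * k + 4) := le_self_pow₀ hD1 (by omega)
      calc 72 * B ^ 2 * 3 ^ (2 * k + 3) * (C2 * x ^ 2) = D * x ^ 2 := by rw [hD]; ring
        _ ≤ _ := by gcongr
    linarith
  have hsz2 : 12 * (h * (h * (2 * ρ + 1))) ≤ U.card := by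
    have h1 : ψ * (U.card : ℝ) ≤ U.card := mul_le_of_le_one_left (by positivity) hψ1
    have h2 : (12 * (h * (h * (2 * ρ + 1))) : ℝ) ≤ U.card := by nlinarith [sq_nonneg (h : ℝ)]
    exact_mod_cast h2
  obtain ⟨𝒞, h1, -, h2, h3, h4⟩ := clique_of_expander (HG G X S cL) U ψ hψ0 h ρ hgrow hUpos hsz hsz2 hcon
  have := clique_bound G X S cL Δ hcL hcLc 𝒞 (2 * ρ) h2 h3 h4
    (c * ((((2 * (2 * ρ) + 1 : ℕ) : ℝ)) + 1) ^ k) (by positivity) (hN _)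
  rw [h1] at this
  linarith


set_option maxHeartbeats 2000000 in
theorem division (p : ℕ) (hp : 1 ≤ p) (D : ℝ) (hD : 1 ≤ D) : ∃ M : ℝ, 0 ≤ M ∧
    ∀ (V : Type) (H : SimpleGraph V),
    (∀ (U : Finset V) (x : ℝ), 4 * D ≤ x → x ^ p = U.card →
      ∃ A ⊆ U, A.Nonempty ∧ 3 * A.card ≤ 2 * U.card ∧ ((nb H U A).card : ℝ) < D / x * A.card) →
    ∀ ε t : ℝ, 0 < ε → ε < 1 → 4 * D ≤ t → D + M ≤ ε * t → ∀ U : Finset V,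
    ∃ (ι : Type) (_ : Fintype ι) (P : ι → Finset V), (∀ i, P i ⊆ U) ∧
      (∀ i, ((P i).card : ℝ) ≤ (3 * t) ^ p) ∧ (∀ x ∈ U, ∃ i, x ∈ P i) ∧
      (∀ x ∈ U, ∀ y ∈ U, H.Adj x y → ∃ i, x ∈ P i ∧ y ∈ P i) ∧
      (∑ i, ((P i).card : ℝ)) ≤ (1 + ε) * U.card := by
  classical
  have hp0 : p ≠ 0 := by omega
  have hpr : (0 : ℝ) < 1 / p := by positivity
  set κ : ℝ := (5 / 6 : ℝ) ^ (1 / (p : ℝ)) with hκ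
  have hκ0 : 0 < κ := by positivity
  have hκ1 : κ < 1 := Real.rpow_lt_one (by norm_num) (by norm_num) hpr
  have hκ2 : 0 < 1 / κ - 1 := by
    have : 1 < 1 / κ := by rw [lt_div_iff₀ hκ0]; linarith
    linarith
  set M : ℝ := 2 * D / (1 / κ - 1) with hM
  have hM0 : 0 ≤ M := by positivity
  have hMκ : M * (1 / κ - 1) = 2 * D := by rw [hM]; exact div_mul_cancel₀ _ hκ2.ne'
  refine ⟨M, hM0, ?_⟩
  intro V H hcut ε t hε hε1 ht hDM
  have ht0 : 0 < t := by linarith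
  set rt : ℕ → ℝ := fun n => (n : ℝ) ^ (1 / (p : ℝ)) with hrt
  have rt_pow : ∀ n : ℕ, rt n ^ p = n := by
    intro n
    simp only [hrt]
    rw [one_div, Real.rpow_inv_natCast_pow (by positivity) hp0]
  have rt_nn : ∀ n, 0 ≤ rt n := fun n => by simp only [hrt]; positivity
  have rt_mono : ∀ a b : ℕ, a ≤ b → rt a ≤ rt b := by
    intro a b hab
    simp only [hrt]
    apply Real.rpow_le_rpow (by positivity) (by exact_mod_cast hab) hpr.le
  have rt_pos : ∀ n : ℕ, 0 < n → 0 < rt n := by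
    intro n hn
    simp only [hrt]
    have : (0 : ℝ) < n := by exact_mod_cast hn
    positivity
  set g : ℕ → ℝ := fun n => max 0 (ε * n - M * n / rt n) with hg
  suffices hmain : ∀ n : ℕ, ∀ U : Finset V, U.card = n →
      ∃ (ι : Type) (_ : Fintype ι) (P : ι → Finset V), (∀ i, P i ⊆ U) ∧
      (∀ i, ((P i).card : ℝ) ≤ (3 * t) ^ p) ∧ (∀ x ∈ U, ∃ i, x ∈ P i) ∧
      (∀ x ∈ U, ∀ y ∈ U, H.Adj x y → ∃ i, x ∈ P i ∧ y ∈ P i) ∧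
      (∑ i, ((P i).card : ℝ)) ≤ n + g n by
    intro U
    obtain ⟨ι, hι, P, h1, h2, h3, h4, h5⟩ := hmain _ U rfl
    refine ⟨ι, hι, P, h1, h2, h3, h4, h5.trans ?_⟩
    have : g U.card ≤ ε * U.card := by
      simp only [hg]
      apply max_le (by positivity)
      have : 0 ≤ M * U.card / rt U.card := div_nonneg (by positivity) (rt_nn _)
      linarith
    linarith
  intro n
  induction n using Nat.strong_induction_on with
  | _ n ih =>
  intro U hUn
  by_cases hsmall : (n : ℝ) ≤ (3 * t) ^ p
  · refine ⟨Unit, inferInstance, fun _ => U, fun _ => subset_rfl, fun _ => by rw [hUn]; exact hsmall,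
      fun x hx => ⟨(), hx⟩, fun x hx y hy _ => ⟨(), hx, hy⟩, ?_⟩
    simp only [Finset.univ_unique, Finset.sum_const, Finset.card_singleton, one_smul, hUn]
    have : 0 ≤ g n := le_max_left _ _
    linarith
  push Not at hsmall
  set x := rt n with hx
  have hxt : 3 * t < x := by
    have h1 : (3 * t) ^ p < x ^ p := by rw [hx, rt_pow]; exact hsmall
    exact lt_of_pow_lt_pow_left₀ p (rt_nn n) h1
  have hx0 : 0 < x := by linarith
  obtain ⟨A, hAU, hAne, hA3, hAs⟩ := hcut U x (by linarith) (by rw [hx, rt_pow, hUn])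
  set s := (nb H U A).card with hs
  set a := A.card with ha
  have ha0 : 0 < a := Finset.card_pos.2 hAne
  have hdis : Disjoint A (nb H U A) := by
    rw [Finset.disjoint_left]
    intro y hy hy'
    exact (mem_nb.1 hy').2.1 hy
  have hc1 : (A ∪ nb H U A).card = a + s := Finset.card_union_of_disjoint hdis
  have hc2 : (U \ A).card = n - a := by rw [Finset.card_sdiff_of_subset hAU, hUn]
  have han : a ≤ n := hUn ▸ Finset.card_le_card hAU
  have ha3 : (a : ℝ) ≤ 2 / 3 * n := by
    have : (3 * a : ℝ) ≤ 2 * n := by rw [← hUn]; exact_mod_cast hA3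
    linarith
  have har : (0 : ℝ) < a := by exact_mod_cast ha0
  have hDx : D / x ≤ 1 / 12 := by
    rw [div_le_iff₀ hx0]; linarith
  have hs12 : (s : ℝ) ≤ 1 / 12 * a := hAs.le.trans (by gcongr)
  have hsum56 : ((a + s : ℕ) : ℝ) ≤ 5 / 6 * n := by push_cast; linarith
  have hn0 : (0 : ℝ) < n := by linarith
  have hlt1 : a + s < n := by
    have : ((a + s : ℕ) : ℝ) < n := by linarith
    exact_mod_cast this
  obtain ⟨ι₁, hι₁, P₁, p1, p2, p3, p4, p5⟩ := ih (a + s) hlt1 _ hc1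
  obtain ⟨ι₂, hι₂, P₂, q1, q2, q3, q4, q5⟩ := ih (n - a) (by omega) _ hc2
  have hsub1 : A ∪ nb H U A ⊆ U := Finset.union_subset hAU (fun y hy => (mem_nb.1 hy).1)
  refine ⟨ι₁ ⊕ ι₂, inferInstance, Sum.elim P₁ P₂, ?_, ?_, ?_, ?_, ?_⟩
  · rintro (i | i)
    · exact (p1 i).trans hsub1
    · exact (q1 i).trans Finset.sdiff_subset
  · rintro (i | i)
    · exact p2 i
    · exact q2 i
  · intro y hy
    by_cases hyA : y ∈ A
    · obtain ⟨i, hi⟩ := p3 y (Finset.mem_union_left _ hyA)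
      exact ⟨Sum.inl i, hi⟩
    · obtain ⟨i, hi⟩ := q3 y (Finset.mem_sdiff.2 ⟨hy, hyA⟩)
      exact ⟨Sum.inr i, hi⟩
  · intro y hy z hz hyz
    have haux : ∀ y ∈ U, ∀ z ∈ U, H.Adj y z → y ∈ A → z ∈ A ∪ nb H U A := by
      intro y hy z hz hyz hyA
      by_cases hzA : z ∈ A
      · exact Finset.mem_union_left _ hzA
      · exact Finset.mem_union_right _ (mem_nb.2 ⟨hz, hzA, y, hyA, hyz⟩)
    by_cases hyA : y ∈ A
    · obtain ⟨i, hi⟩ := p4 y (Finset.mem_union_left _ hyA) z (haux y hy z hz hyz hyA) hyz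
      exact ⟨Sum.inl i, hi⟩
    · by_cases hzA : z ∈ A
      · obtain ⟨i, hi⟩ := p4 y (haux z hz y hy hyz.symm hzA) z (Finset.mem_union_left _ hzA) hyz
        exact ⟨Sum.inl i, hi⟩
      · obtain ⟨i, hi⟩ := q4 y (Finset.mem_sdiff.2 ⟨hy, hyA⟩) z (Finset.mem_sdiff.2 ⟨hz, hzA⟩) hyz
        exact ⟨Sum.inr i, hi⟩
  · rw [Fintype.sum_sum_type]
    simp only [Sum.elim_inl, Sum.elim_inr]
    set b := n - a with hb
    have hbr : (b : ℝ) = n - a := by rw [hb, Nat.cast_sub han]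
    have hb3 : 1 / 3 * (n : ℝ) ≤ b := by rw [hbr]; linarith
    have hb0 : 0 < b := by
      have : (0 : ℝ) < b := by linarith
      exact_mod_cast this
    have hgb : g b ≤ ε * b - M * b / x := by
      have hrb : t ≤ rt b := by
        have h1 : t ^ p ≤ rt b ^ p := by
          rw [rt_pow]
          refine le_trans ?_ hb3
          have h2 : (3 : ℝ) ≤ 3 ^ p := le_self_pow₀ (by norm_num) hp0
          have h3 : (3 * t) ^ p = 3 ^ p * t ^ p := mul_pow _ _ _
          have h4 : 0 ≤ t ^ p := by positivity
          nlinarith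
        exact le_of_pow_le_pow_left₀ hp0 (rt_nn b) h1
      have hrbx : rt b ≤ x := rt_mono _ _ (by omega)
      have hrb0 : 0 < rt b := by linarith
      have h1 : M * b / x ≤ M * b / rt b := by gcongr
      simp only [hg]
      apply max_le
      · have h2 : M / x ≤ ε := by
          rw [div_le_iff₀ hx0]
          have : ε * t ≤ ε * x := by gcongr; linarith
          linarith
        have h3 : M * b / x = (M / x) * b := by ring
        rw [h3, ← sub_mul]
        exact mul_nonneg (by linarith) (by positivity)
      · linarith
    have hgn : ε * n - M * n / x ≤ g n := le_max_right _ _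
    have hMn : M * n / x = M * a / x + M * b / x := by rw [hbr]; ring
    have hDa : D / x * a = D * a / x := by ring
    have hgas : s + g (a + s) ≤ ε * a - M * a / x := by
      rcases le_total (ε * ((a + s : ℕ) : ℝ) - M * ((a + s : ℕ) : ℝ) / rt (a + s)) 0 with hc | hc
      · have h0 : g (a + s) = 0 := max_eq_left hc
        rw [h0]
        have h2 : (D + M) / x ≤ ε := by
          rw [div_le_iff₀ hx0]
          have : ε * t ≤ ε * x := by gcongr; linarith
          linarith
        have h3 : (D + M) / x * a ≤ ε * a := by gcongr
        have h4 : (D + M) / x * a = D * a / x + M * a / x := by ring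
        linarith
      · have h0 : g (a + s) = ε * ((a + s : ℕ) : ℝ) - M * ((a + s : ℕ) : ℝ) / rt (a + s) := max_eq_right hc
        rw [h0]
        have hy : rt (a + s) ≤ κ * x := by
          rw [hx, hκ]
          simp only [hrt]
          rw [← Real.mul_rpow (by norm_num) (by positivity)]
          exact Real.rpow_le_rpow (by positivity) hsum56 hpr.le
        have hy0 : 0 < rt (a + s) := rt_pos _ (by omega)
        have h5 : M * a / (κ * x) ≤ M * ((a + s : ℕ) : ℝ) / rt (a + s) := by
          have : (a : ℝ) ≤ ((a + s : ℕ) : ℝ) := by exact_mod_cast Nat.le_add_right _ _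
          gcongr
        have h6 : M * a / (κ * x) - M * a / x = 2 * (D * a / x) := by
          have : M * a / (κ * x) - M * a / x = (M * (1 / κ - 1)) * (a / x) := by ring
          rw [this, hMκ]; ring
        have h7 : ε * (s : ℝ) ≤ s := mul_le_of_le_one_left (by positivity) hε1.le
        push_cast at h5 ⊢
        linarith
    have hεn : ε * n = ε * a + ε * b := by rw [hbr]; ring
    rw [Nat.cast_add] at p5
    linarith


def Jn {V : Type} (G : SimpleGraph V) (A : Set V) (x y : V) : Prop := ∃ n, Sq G A x y n

theorem Jn.mono {V : Type} {G : SimpleGraph V} {A B : Set V} {x y : V} (h : Jn G A x y)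
    (hAB : A ⊆ B) : Jn G B x y := by
  obtain ⟨n, h⟩ := h
  exact ⟨n, h.mono hAB⟩

theorem Jn.symm {V : Type} {G : SimpleGraph V} {A : Set V} {x y : V} (h : Jn G A x y) :
    Jn G A y x := by
  obtain ⟨n, h⟩ := h
  exact ⟨n, h.symm⟩

theorem Jn.trans {V : Type} {G : SimpleGraph V} {A : Set V} {x y z : V} (h : Jn G A x y)
    (h' : Jn G A y z) : Jn G A x z := by
  obtain ⟨n, h⟩ := h
  obtain ⟨m, h'⟩ := h'
  exact ⟨_, h.trans h'⟩

theorem Jn.near {V : Type} {G : SimpleGraph V} {A : Set V} {x y : V} (hx : x ∈ A) (hy : y ∈ A)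
    (h : x = y ∨ G.Adj x y) : Jn G A x y := by
  rcases h with rfl | h
  · exact ⟨0, .refl hx⟩
  · exact ⟨1, .step (.refl hx) h hy⟩

theorem Jn.of_conn {V : Type} {G : SimpleGraph V} {A : Set V} (h : (G.induce A).Connected)
    {x y : V} (hx : x ∈ A) (hy : y ∈ A) : Jn G A x y := by
  obtain ⟨w⟩ := h.preconnected ⟨x, hx⟩ ⟨y, hy⟩
  have : ∀ (u v : A) (w : (G.induce A).Walk u v), Jn G A u v := by
    intro u v w
    induction w with
    | nil => exact Jn.near (Subtype.prop _) (Subtype.prop _) (Or.inl rfl)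
    | cons ha _ ih => exact (Jn.near (Subtype.prop _) (Subtype.prop _) (Or.inr ha)).trans ih
  exact this _ _ w

theorem conn_of_Jn {V : Type} {G : SimpleGraph V} {A : Set V} (hne : A.Nonempty)
    (h : ∀ x ∈ A, ∀ y ∈ A, Jn G A x y) : (G.induce A).Connected := by
  have : Nonempty A := hne.to_subtype
  refine ⟨?_⟩
  rintro ⟨x, hx⟩ ⟨y, hy⟩
  obtain ⟨n, hn⟩ := h x hx y hy
  obtain ⟨_, _, w, _⟩ := hn.reach
  exact ⟨w⟩

theorem Jn.cross {V : Type} {G : SimpleGraph V} {A I : Set V} {x z : V} (h : Jn G A x z)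
    (hx : x ∉ I) (hz : z ∈ I) :
    ∃ y w, Jn G (A \ I) x y ∧ y ∈ A ∧ y ∉ I ∧ w ∈ A ∧ w ∈ I ∧ G.Adj y w := by
  obtain ⟨n, h⟩ := h
  have key : Jn G (A \ I) x z ∨
      ∃ y w, Jn G (A \ I) x y ∧ y ∈ A ∧ y ∉ I ∧ w ∈ A ∧ w ∈ I ∧ G.Adj y w := by
    clear hz
    induction h with
    | refl h => exact Or.inl ⟨0, .refl ⟨h, hx⟩⟩
    | @step y z n h ha hz ih =>
      rcases ih with ih | ih
      · obtain ⟨m, hm⟩ := ih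
        by_cases hzI : z ∈ I
        · exact Or.inr ⟨y, z, ⟨m, hm⟩, hm.right_mem.1, hm.right_mem.2, hz, hzI, ha⟩
        · exact Or.inl ⟨_, hm.step ha ⟨hz, hzI⟩⟩
      · exact Or.inr ih
  rcases key with ⟨m, hm⟩ | key
  · exact absurd hz hm.right_mem.2
  · exact key

theorem connect {V : Type} [DecidableEq V] (G : SimpleGraph V) (D : Set V)
    (hD : (G.induce D).Connected) : ∀ (b : ℕ) (L0 R0 : Finset V), (L0 : Set V) ⊆ D →
    (∀ v ∈ D, ∃ u ∈ L0, u = v ∨ G.Adj u v) → R0.card ≤ b + 1 →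
    (∀ x ∈ L0, ∃ r ∈ R0, Jn G (L0 : Set V) x r) →
    ∃ L2 : Finset V, L0 ⊆ L2 ∧ (L2 : Set V) ⊆ D ∧ (G.induce (L2 : Set V)).Connected ∧
      (L2 \ L0).card ≤ 2 * b := by
  intro b
  induction b with
  | zero =>
    intro L0 R0 hLD hdom hR hrep
    refine ⟨L0, subset_rfl, hLD, ?_, by simp⟩
    apply conn_of_Jn
    · obtain ⟨v⟩ := hD.nonempty
      obtain ⟨u, hu, _⟩ := hdom v v.2
      exact ⟨u, hu⟩
    · intro x hx y hy
      obtain ⟨r, hr, h1⟩ := hrep x hx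
      obtain ⟨r', hr', h2⟩ := hrep y hy
      have : r = r' := Finset.card_le_one.1 (by omega) r hr r' hr'
      subst this
      exact h1.trans h2.symm
  | succ b ih =>
    intro L0 R0 hLD hdom hR hrep
    by_cases hall : ∀ x ∈ L0, ∀ y ∈ L0, Jn G (L0 : Set V) x y
    · refine ⟨L0, subset_rfl, hLD, ?_, by simp⟩
      apply conn_of_Jn
      · obtain ⟨v⟩ := hD.nonempty
        obtain ⟨u, hu, _⟩ := hdom v v.2
        exact ⟨u, hu⟩
      · exact hall
    · push Not at hall
      obtain ⟨c0, hc0, a0, ha0, hnj⟩ := hall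
      set T : Set V := {v | ∃ u ∈ L0, ¬ Jn G (L0 : Set V) c0 u ∧ (u = v ∨ G.Adj u v)} with hT
      have hcT : c0 ∉ T := by
        rintro ⟨u, hu, hn, h⟩
        exact hn (Jn.near hu hc0 h).symm
      have haT : a0 ∈ T := ⟨a0, ha0, hnj, Or.inl rfl⟩
      obtain ⟨y, w, -, hyD, hyT, hwD, ⟨u', hu', hnu, huw⟩, hyw⟩ :=
        (Jn.of_conn hD (hLD hc0) (hLD ha0)).cross hcT haT
      obtain ⟨u, hu, huy⟩ := hdom y hyD
      have hcu : Jn G (L0 : Set V) c0 u := by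
        by_contra hcon
        exact hyT ⟨u, hu, hcon, huy⟩
      obtain ⟨c, hc, hcc⟩ := hrep c0 hc0
      obtain ⟨r, hr, hur⟩ := hrep u' hu'
      have hcr : c ≠ r := by
        rintro rfl
        exact hnu (hcc.trans hur.symm)
      set L1 : Finset V := insert y (insert w L0) with hL1
      have hsub : L0 ⊆ L1 := fun z hz => by simp [hL1, hz]
      have hsubs : (L0 : Set V) ⊆ (L1 : Set V) := by exact_mod_cast hsub
      have hyL : y ∈ (L1 : Set V) := by simp [hL1]
      have hwL : w ∈ (L1 : Set V) := by simp [hL1]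
      have hyc : Jn G (L1 : Set V) y c :=
        ((Jn.near (hsubs hu) hyL huy).symm.trans (hcu.symm.mono hsubs)).trans (hcc.mono hsubs)
      have hwc : Jn G (L1 : Set V) w c := (Jn.near hyL hwL (Or.inr hyw)).symm.trans hyc
      have hrc : Jn G (L1 : Set V) r c :=
        ((hur.symm.mono hsubs).trans (Jn.near (hsubs hu') hwL huw)).trans hwc
      have hcm : c ∈ R0.erase r := Finset.mem_erase.2 ⟨hcr, hc⟩
      have k1 : (L1 : Set V) ⊆ D := by
        intro z hz
        have hz' : z = y ∨ z = w ∨ z ∈ L0 := by simpa [hL1] using hz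
        rcases hz' with h | h | h
        · exact h ▸ hyD
        · exact h ▸ hwD
        · exact hLD h
      have k2 : ∀ v ∈ D, ∃ u ∈ L1, u = v ∨ G.Adj u v := by
        intro v hv
        obtain ⟨u, hu, h⟩ := hdom v hv
        exact ⟨u, hsub hu, h⟩
      have k3 : (R0.erase r).card ≤ b + 1 := by
        rw [Finset.card_erase_of_mem hr]; omega
      have k4 : ∀ z ∈ L1, ∃ r' ∈ R0.erase r, Jn G (L1 : Set V) z r' := by
        intro z hz
        have hz' : z = y ∨ z = w ∨ z ∈ L0 := by simpa [hL1] using hz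
        rcases hz' with h | h | h
        · exact ⟨c, hcm, h ▸ hyc⟩
        · exact ⟨c, hcm, h ▸ hwc⟩
        · obtain ⟨q, hq, hzq⟩ := hrep z h
          by_cases hqr : q = r
          · rw [hqr] at hzq
            exact ⟨c, hcm, (hzq.mono hsubs).trans hrc⟩
          · exact ⟨q, Finset.mem_erase.2 ⟨hqr, hq⟩, hzq.mono hsubs⟩
      obtain ⟨L2, h1, h2, h3, h4⟩ := ih L1 (R0.erase r) k1 k2 k3 k4
      refine ⟨L2, hsub.trans h1, h2, h3, ?_⟩
      have : L2 \ L0 ⊆ (L2 \ L1) ∪ {y, w} := by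
        intro z hz
        simp only [Finset.mem_sdiff, Finset.mem_union, hL1, Finset.mem_insert,
          Finset.mem_singleton] at hz ⊢
        tauto
      have h5 := Finset.card_le_card this
      have h6 := Finset.card_union_le (L2 \ L1) {y, w}
      have h7 : ({y, w} : Finset V).card ≤ 2 := Finset.card_le_two
      omega

theorem exchange {V : Type} [Fintype V] [DecidableEq V] (G : SimpleGraph V) (δ : V → ℕ)
    (hδ : ∀ v, 1 ≤ δ v) (D : Set V) (hD : (G.induce D).Connected) (L S P I : Finset V)
    (hLD : (L : Set V) ⊆ D) (hSD : (S : Set V) ⊆ D)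
    (hLc : (G.induce (L : Set V)).Connected) (hSc : (G.induce (S : Set V)).Connected)
    (hSm : MeetsDemands G δ (S : Set V))
    (cL : V → Finset V) (hcL : ∀ v, cL v ⊆ L) (hcN : ∀ v, ∀ l ∈ cL v, l = v ∨ G.Adj l v)
    (hcδ : ∀ v, δ v ≤ (cL v).card) (hIP : I ⊆ P)
    (hN : ∀ x ∈ I, ∀ y, (HG G ((L : Set V) ∪ S) (S : Set V) cL).Adj x y → y ∈ P)
    (K : ℕ) (hmin : ∀ L2 : Finset V, (L2 : Set V) ⊆ D → (G.induce (L2 : Set V)).Connected →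
      MeetsDemands G δ (L2 : Set V) → (symmDiff L L2).card ≤ K → L.card ≤ L2.card)
    (hK : 3 * P.card ≤ K) :
    (L ∩ I).card ≤ (S ∩ P).card + 2 * (P \ I).card := by
  rcases (L ∩ I).eq_empty_or_nonempty with he | ⟨z0, hz0⟩
  · simp [he]
  rw [Finset.mem_inter] at hz0
  set L0 : Finset V := (L \ I) ∪ (S ∩ P) with hL0
  have hadj : ∀ x y, x ∈ L ∪ S → y ∈ L ∪ S → G.Adj x y →
      (HG G ((L : Set V) ∪ S) (S : Set V) cL).Adj x y := by
    intro x y hx hy h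
    refine ⟨h.ne, ?_, ?_, Or.inl h⟩
    · simpa using hx
    · simpa using hy
  have hmeet : ∀ A : Finset V, L0 ⊆ A → MeetsDemands G δ (A : Set V) := by
    intro A hA v
    by_cases h : ∃ l ∈ cL v, l ∈ I
    · obtain ⟨l, hl, hlI⟩ := h
      refine (hSm v).trans (Set.ncard_le_ncard ?_ (Set.toFinite _))
      rintro u ⟨huS, hu⟩
      refine ⟨?_, hu⟩
      have huS' : u ∈ S := huS
      have huP : u ∈ P := by
        by_cases hul : l = u
        · subst hul; exact hIP hlI
        · refine hN l hlI u ⟨hul, Or.inl (hcL v hl), Or.inr huS, Or.inr ⟨v, Or.inl ⟨hl, huS, hu⟩⟩⟩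
      exact hA (Finset.mem_union_right _ (Finset.mem_inter.2 ⟨huS', huP⟩))
    · push Not at h
      refine (hcδ v).trans ?_
      rw [← Set.ncard_coe_finset]
      refine Set.ncard_le_ncard ?_ (Set.toFinite _)
      intro u hu
      exact ⟨hA (Finset.mem_union_left _ (Finset.mem_sdiff.2 ⟨hcL v hu, h u hu⟩)), hcN v u hu⟩
  have hdom : ∀ v ∈ D, ∃ u ∈ L0, u = v ∨ G.Adj u v := by
    intro v _
    have h1 := (hδ v).trans (hmeet L0 subset_rfl v)
    obtain ⟨u, hu, h⟩ := Set.nonempty_of_ncard_ne_zero (Nat.one_le_iff_ne_zero.1 h1)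
    exact ⟨u, hu, h⟩
  have hL0D : (L0 : Set V) ⊆ D := by
    intro z hz
    have hz' : z ∈ L0 := hz
    simp only [hL0, Finset.mem_union, Finset.mem_sdiff, Finset.mem_inter] at hz'
    rcases hz' with h | h
    · exact hLD h.1
    · exact hSD h.1
  have hs1 : ((L : Set V) \ (I : Set V)) ⊆ (L0 : Set V) := by
    intro z hz
    exact Finset.mem_union_left _ (Finset.mem_sdiff.2 hz)
  have hs2 : ((S : Set V) \ (P : Set V)ᶜ) ⊆ (L0 : Set V) := by
    intro z hz
    exact Finset.mem_union_right _ (Finset.mem_inter.2 ⟨hz.1, not_not.1 hz.2⟩)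
  obtain ⟨⟨s0, hs0⟩⟩ := hSc.nonempty
  have hrep : ∃ R0 : Finset V, R0.card ≤ (P \ I).card + 1 ∧
      ∀ x ∈ L0, ∃ r ∈ R0, Jn G (L0 : Set V) x r := by
    have hA : ∀ x ∈ L \ I, ∃ r ∈ P \ I, Jn G (L0 : Set V) x r := by
      intro x hx
      rw [Finset.mem_sdiff] at hx
      obtain ⟨y, w, h1, h2, h3, h4, h5, h6⟩ := (Jn.of_conn hLc (x := x) (y := z0) hx.1 hz0.1).cross
        (I := (I : Set V)) hx.2 hz0.2
      refine ⟨y, Finset.mem_sdiff.2 ⟨?_, h3⟩, h1.mono hs1⟩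
      exact hN w h5 y (hadj w y (Finset.mem_union_left _ h4) (Finset.mem_union_left _ h2) h6.symm)
    by_cases hSP : S ⊆ P
    · refine ⟨insert s0 (P \ I), Finset.card_insert_le _ _, ?_⟩
      intro x hx
      rcases Finset.mem_union.1 hx with hx | hx
      · obtain ⟨r, hr, h⟩ := hA x hx
        exact ⟨r, Finset.mem_insert_of_mem hr, h⟩
      · refine ⟨s0, Finset.mem_insert_self _ _, ?_⟩
        refine (Jn.of_conn hSc (x := x) (Finset.mem_inter.1 hx).1 hs0).mono ?_
        intro z hz
        exact hs2 ⟨hz, not_not.2 (hSP hz)⟩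
    · rw [Finset.not_subset] at hSP
      obtain ⟨z, hzS, hzP⟩ := hSP
      refine ⟨P \ I, by omega, ?_⟩
      intro x hx
      rcases Finset.mem_union.1 hx with hx | hx
      · exact hA x hx
      · rw [Finset.mem_inter] at hx
        obtain ⟨y, w, h1, h2, h3, h4, h5, h6⟩ := (Jn.of_conn hSc (x := x) (y := z) hx.1 hzS).cross
          (I := (P : Set V)ᶜ) (not_not.2 hx.2) hzP
        refine ⟨y, Finset.mem_sdiff.2 ⟨not_not.1 h3, ?_⟩, h1.mono hs2⟩
        intro hyI
        exact h5 (hN y hyI w (hadj y w (Finset.mem_union_right _ h2) (Finset.mem_union_right _ h4) h6))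
  obtain ⟨R0, hR0, hrep⟩ := hrep
  obtain ⟨L2, g1, g2, g3, g4⟩ := connect G D hD (P \ I).card L0 R0 hL0D hdom hR0 hrep
  have hBP : (P \ I).card ≤ P.card := Finset.card_le_card Finset.sdiff_subset
  have hsd : symmDiff L L2 ⊆ P ∪ (L2 \ L0) := by
    intro z hz
    rw [Finset.mem_symmDiff] at hz
    rcases hz with ⟨h1, h2⟩ | ⟨h1, h2⟩
    · apply Finset.mem_union_left
      by_contra h
      exact h2 (g1 (Finset.mem_union_left _ (Finset.mem_sdiff.2 ⟨h1, fun h' => h (hIP h')⟩)))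
    · by_cases hz : z ∈ L0
      · apply Finset.mem_union_left
        rcases Finset.mem_union.1 hz with h | h
        · exact absurd (Finset.mem_sdiff.1 h).1 h2
        · exact (Finset.mem_inter.1 h).2
      · exact Finset.mem_union_right _ (Finset.mem_sdiff.2 ⟨h1, hz⟩)
  have h1 := Finset.card_le_card hsd
  have h2 := Finset.card_union_le P (L2 \ L0)
  have h3 := hmin L2 g2 g3 (hmeet L2 g1) (by omega)
  have h4 := Finset.card_sdiff_add_card_eq_card g1
  have h5 : L0.card ≤ (L \ I).card + (S ∩ P).card := Finset.card_union_le _ _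
  have h6 := Finset.card_sdiff_add_card_inter L I
  omega


theorem dc {V ι : Type} [DecidableEq V] [Fintype ι] (P : ι → Finset V) (A : Finset V) :
    ∑ i, (A ∩ P i).card = ∑ x ∈ A, (Finset.univ.filter (fun i => x ∈ P i)).card := by
  have h1 : ∀ i, (A ∩ P i).card = ∑ x ∈ A, if x ∈ P i then 1 else 0 := by
    intro i
    rw [← Finset.filter_mem_eq_inter, Finset.card_filter]
  simp only [h1, Finset.card_filter]
  exact Finset.sum_comm

theorem sums {V ι : Type} [DecidableEq V] [Fintype ι] (P : ι → Finset V) (U L S bd : Finset V)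
    (hL : L ⊆ U) (hS : S ⊆ U) (hP : ∀ i, P i ⊆ U) (hcov : ∀ x ∈ U, ∃ i, x ∈ P i) (e : ℝ)
    (hsum : (∑ i, ((P i).card : ℝ)) ≤ (1 + e) * U.card) (hbdU : bd ⊆ U)
    (hbd : ∀ x ∈ bd, 2 ≤ (Finset.univ.filter (fun i => x ∈ P i)).card)
    (h : ∀ i, (L ∩ (P i \ bd)).card ≤ (S ∩ P i).card + 2 * (P i \ (P i \ bd)).card) :
    (L.card : ℝ) ≤ S.card + 6 * (e * U.card) := by
  set m : V → ℕ := fun x => (Finset.univ.filter (fun i => x ∈ P i)).card with hm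
  have hm1 : ∀ x ∈ U, 1 ≤ m x := by
    intro x hx
    obtain ⟨i, hi⟩ := hcov x hx
    exact Finset.card_pos.2 ⟨i, by simp [hi]⟩
  have e1 : ∀ i, L ∩ (P i \ bd) = (L \ bd) ∩ P i := by
    intro i; ext x; simp only [Finset.mem_inter, Finset.mem_sdiff]; tauto
  have e2 : ∀ i, P i \ (P i \ bd) = bd ∩ P i := by
    intro i; ext x; simp only [Finset.mem_inter, Finset.mem_sdiff]; tauto
  have e3 : ∀ i, U ∩ P i = P i := fun i => Finset.inter_eq_right.2 (hP i)
  have hs := Finset.sum_le_sum (s := Finset.univ) (fun i _ => h i)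
  simp only [e1, e2, Finset.sum_add_distrib, ← Finset.mul_sum] at hs
  rw [dc, dc, dc] at hs
  change ∑ x ∈ L \ bd, m x ≤ ∑ x ∈ S, m x + 2 * ∑ x ∈ bd, m x at hs
  have hU := dc P U
  simp only [e3] at hU
  change ∑ i, (P i).card = ∑ x ∈ U, m x at hU
  set w : ℕ := ∑ x ∈ U, (m x - 1) with hw
  have hUw : ∑ x ∈ U, m x = U.card + w := by
    rw [hw, Finset.card_eq_sum_ones, ← Finset.sum_add_distrib]
    apply Finset.sum_congr rfl
    intro x hx
    have := hm1 x hx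
    omega
  have hSw : ∑ x ∈ S, m x ≤ S.card + w := by
    have h1 : ∑ x ∈ S, m x = S.card + ∑ x ∈ S, (m x - 1) := by
      rw [Finset.card_eq_sum_ones, ← Finset.sum_add_distrib]
      apply Finset.sum_congr rfl
      intro x hx
      have := hm1 x (hS hx)
      omega
    have h2 : ∑ x ∈ S, (m x - 1) ≤ w := Finset.sum_le_sum_of_subset hS
    omega
  have hbw0 : ∑ x ∈ bd, (m x - 1) ≤ w := Finset.sum_le_sum_of_subset hbdU
  have hbw : ∑ x ∈ bd, m x ≤ 2 * ∑ x ∈ bd, (m x - 1) := by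
    rw [Finset.mul_sum]
    apply Finset.sum_le_sum
    intro x hx
    have : 2 ≤ m x := hbd x hx
    omega
  have hbc : bd.card ≤ ∑ x ∈ bd, (m x - 1) := by
    rw [Finset.card_eq_sum_ones]
    apply Finset.sum_le_sum
    intro x hx
    have : 2 ≤ m x := hbd x hx
    omega
  have hLc : (L \ bd).card ≤ ∑ x ∈ L \ bd, m x := by
    rw [Finset.card_eq_sum_ones]
    apply Finset.sum_le_sum
    intro x hx
    exact hm1 x (hL (Finset.mem_sdiff.1 hx).1)
  have hLL : L.card ≤ (L \ bd).card + bd.card := by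
    have h1 := Finset.card_sdiff_add_card_inter L bd
    have h2 : (L ∩ bd).card ≤ bd.card := Finset.card_le_card Finset.inter_subset_right
    omega
  have hfin : L.card ≤ S.card + 6 * w := by omega
  have hUr : (U.card : ℝ) + w ≤ (1 + e) * U.card := by
    refine le_trans (le_of_eq ?_) hsum
    rw [hUw] at hU
    exact_mod_cast hU.symm
  have hfr : (L.card : ℝ) ≤ S.card + 6 * w := by exact_mod_cast hfin
  linarith


/-- PTAS via local search for connected dominating set with demands on graphs
with polynomial expansion `∇_r(G) ≤ c(r+1)^k`. -/
theorem stmt17 (k Δ : ℕ) (hk : 1 ≤ k) (hΔ : 1 ≤ Δ) (c : ℝ) (hc : 0 < c) :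
    ∃ C : ℝ, 0 < C ∧
      ∀ (V : Type) [Fintype V] (G : SimpleGraph V), G.Connected →
        (∀ r : ℕ, NablaLE G r (c * ((r : ℝ) + 1) ^ k)) →
        ∀ δ : V → ℕ, (∀ v, 1 ≤ δ v ∧ δ v ≤ Δ) →
        ∀ D : Set V, (G.induce D).Connected → MeetsDemands G δ D →
        ∀ ε : ℝ, 0 < ε → ε < 1 →
          ∀ L ⊆ D, (G.induce L).Connected → MeetsDemands G δ L →
            (¬ ∃ L' ⊆ D, (G.induce L').Connected ∧ MeetsDemands G δ L' ∧
              (symmDiff L L').ncard ≤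
                ⌈C * ε⁻¹ ^ (2 * k + 6) * (1 + Real.log (1 / ε)) ^ (2 * k + 5)⌉₊ ∧
              L'.ncard < L.ncard) →
            ∀ S ⊆ D, (G.induce S).Connected → MeetsDemands G δ S →
              (L.ncard : ℝ) ≤ (1 + ε) * (S.ncard : ℝ) := by
  classical
  obtain ⟨D₀, hD₀1, hcut⟩ := sparse_cut k Δ c hc
  obtain ⟨M, hM0, hdiv⟩ := division (2 * k + 6) (by omega) D₀ hD₀1
  have hQ : 0 < 72 * (4 * D₀ + M) := by linarith
  refine ⟨3 * (72 * (4 * D₀ + M)) ^ (2 * k + 6), by positivity, ?_⟩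
  intro V _ G _ hnab δ hδ D hD _ ε hε hε1 L hLD hLc hLm hmin S hSD hSc hSm
  set K : ℕ := ⌈3 * (72 * (4 * D₀ + M)) ^ (2 * k + 6) * ε⁻¹ ^ (2 * k + 6) *
    (1 + Real.log (1 / ε)) ^ (2 * k + 5)⌉₊ with hK
  obtain ⟨L, rfl⟩ : ∃ F : Finset V, (F : Set V) = L := ⟨L.toFinite.toFinset, by simp⟩
  obtain ⟨S, rfl⟩ : ∃ F : Finset V, (F : Set V) = S := ⟨S.toFinite.toFinset, by simp⟩
  rw [Set.ncard_coe_finset, Set.ncard_coe_finset]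
  have hcex : ∀ v, ∃ F : Finset V, F ⊆ L ∧ (∀ l ∈ F, l = v ∨ G.Adj l v) ∧ F.card = δ v := by
    intro v
    have h1 := hLm v
    have h2 : ({u ∈ (L : Set V) | u = v ∨ G.Adj u v}) =
        ((L.filter (fun u => u = v ∨ G.Adj u v) : Finset V) : Set V) := by
      ext u; simp
    rw [h2, Set.ncard_coe_finset] at h1
    obtain ⟨F, hF, hFc⟩ := Finset.exists_subset_card_eq h1
    exact ⟨F, fun l hl => (Finset.mem_filter.1 (hF hl)).1,
      fun l hl => (Finset.mem_filter.1 (hF hl)).2, hFc⟩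
  choose cL hcL hcN hcδ using hcex
  have hcut' := hcut V G hnab ((L : Set V) ∪ S) (S : Set V) cL hcN
    (fun v => by rw [hcδ]; exact (hδ v).2)
  have htD : 4 * D₀ ≤ 24 * (4 * D₀ + M) / ε := by
    rw [le_div_iff₀ hε]
    have : 4 * D₀ * ε ≤ 4 * D₀ * 1 := by gcongr
    linarith
  have hte : D₀ + M ≤ ε / 24 * (24 * (4 * D₀ + M) / ε) := by
    have : ε / 24 * (24 * (4 * D₀ + M) / ε) = 4 * D₀ + M := by field_simp
    linarith
  obtain ⟨ι, hι, P, hPU, hPc, hPcov, hPe, hPs⟩ := hdiv V _ hcut' (ε / 24)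
    (24 * (4 * D₀ + M) / ε) (by positivity) (by linarith) htD hte (L ∪ S)
  have hPK : ∀ i, 3 * (P i).card ≤ K := by
    intro i
    have h1 := hPc i
    have h2 : (3 * (24 * (4 * D₀ + M) / ε)) = 72 * (4 * D₀ + M) * ε⁻¹ := by
      rw [div_eq_mul_inv]; ring
    rw [h2, mul_pow] at h1
    have hlog : 0 ≤ Real.log (1 / ε) := Real.log_nonneg (by rw [le_div_iff₀ hε]; linarith)
    have h3 : 1 ≤ (1 + Real.log (1 / ε)) ^ (2 * k + 5) := one_le_pow₀ (by linarith)
    have h4 : 0 ≤ 3 * (72 * (4 * D₀ + M)) ^ (2 * k + 6) * ε⁻¹ ^ (2 * k + 6) := by positivity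
    have h5 := le_mul_of_one_le_right h4 h3
    have h6 : ((3 * (P i).card : ℕ) : ℝ) ≤ (K : ℝ) := by
      refine le_trans ?_ (Nat.le_ceil _)
      push_cast
      linarith
    exact_mod_cast h6
  set bd : Finset V := (L ∪ S).filter
    (fun x => 2 ≤ (Finset.univ.filter (fun i => x ∈ P i)).card) with hbd
  have hex : ∀ i, (L ∩ (P i \ bd)).card ≤ (S ∩ P i).card + 2 * (P i \ (P i \ bd)).card := by
    intro i
    refine exchange G δ (fun v => (hδ v).1) D hD L S (P i) (P i \ bd) hLD hSD hLc hSc hSm cL hcL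
      hcN (fun v => (hcδ v).ge) Finset.sdiff_subset ?_ K ?_ (hPK i)
    · intro x hx y hxy
      rw [Finset.mem_sdiff] at hx
      have hxU : x ∈ L ∪ S := hPU i hx.1
      have hyU : y ∈ L ∪ S := by simpa using hxy.2.2.1
      obtain ⟨j, hj1, hj2⟩ := hPe x hxU y hyU hxy
      have h1 : (Finset.univ.filter (fun i => x ∈ P i)).card ≤ 1 := by
        by_contra hcon
        exact hx.2 (Finset.mem_filter.2 ⟨hxU, by omega⟩)
      have h2 : i = j := Finset.card_le_one.1 h1 i (by simp [hx.1]) j (by simp [hj1])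
      rw [h2]; exact hj2
    · intro L2 h1 h2 h3 h4
      by_contra hcon
      refine hmin ⟨(L2 : Set V), h1, h2, h3, ?_, ?_⟩
      · rw [← Finset.coe_symmDiff, Set.ncard_coe_finset]
        exact h4
      · rw [Set.ncard_coe_finset, Set.ncard_coe_finset]
        omega
  have hfin := sums P (L ∪ S) L S bd Finset.subset_union_left Finset.subset_union_right hPU hPcov
    (ε / 24) hPs (Finset.filter_subset _ _) (fun x hx => (Finset.mem_filter.1 hx).2) hex
  have hU : ((L ∪ S).card : ℝ) ≤ L.card + S.card := by exact_mod_cast Finset.card_union_le L S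
  have hU2 : ε / 24 * ((L ∪ S).card : ℝ) ≤ ε / 24 * (L.card + S.card) := by gcongr
  have hs0 : (0 : ℝ) ≤ S.card := by positivity
  by_contra hcon
  push Not at hcon
  have h1 : (1 - ε / 4) * ((1 + ε) * (S.card : ℝ)) < (1 - ε / 4) * L.card :=
    mul_lt_mul_of_pos_left hcon (by linarith)
  have h2 : 0 ≤ ε * (1 - ε) * (S.card : ℝ) :=
    mul_nonneg (mul_nonneg hε.le (by linarith)) hs0
  nlinarith
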